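/- arXiv:1702.04917 — 9 statements merged into one kernel-verified Lean document; each statement's English description precedes it below -/
import Mathlib

section
/- Let H and F be Hilbert spaces, let Σ ⊆ H be a union of linear subspaces, and let f : H → [0,+∞] be a regularizer with δ_Σ(f) > 0. Then for every δ < δ_Σ(f) there exists a finite constant C = C_Σ(f,δ) (depending only on Σ, f and δ, not on A) such that: for every continuous linear operator A : H → F satisfying the RIP on Σ−Σ with constant δ, every ε ≥ 0, every x ∈ Σ and every e ∈ F with ‖e‖_F ≤ ε, every minimizer x* of f(z) over z ∈ H subject to ‖Az − (Ax+e)‖_F ≤ ε satisfies ‖x* − x‖_H ≤ C·(‖e‖_F + ε). -/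
noncomputable section
open scoped ENNReal NNReal Pointwise RealInnerProductSpace
open Filter Set Classical MeasureTheory ProbabilityTheory

/-- The secant set `Σ - Σ` of a model set. -/
def secantSet {H : Type*} [NormedAddCommGroup H] (S : Set H) : Set H :=
  {u | ∃ x ∈ S, ∃ y ∈ S, u = x - y}

/-- The normalized secant set of a model set. -/
def normSecant {H : Type*} [NormedAddCommGroup H] [NormedSpace ℝ H] (S : Set H) : Set H :=
  {z | ∃ y ∈ secantSet S, y ≠ 0 ∧ z = ‖y‖⁻¹ • y}

/-- The restricted isometry property of `A` on the secant set `Σ - Σ`, with constant `δ`. -/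
def SatisfiesRIP {𝕜 : Type*} [RCLike 𝕜] {H F : Type*} [NormedAddCommGroup H]
    [NormedSpace 𝕜 H] [NormedAddCommGroup F] [NormedSpace 𝕜 F]
    (A : H →L[𝕜] F) (S : Set H) (δ : ℝ) : Prop :=
  ∀ x ∈ secantSet S, (1 - δ) * ‖x‖ ^ 2 ≤ ‖A x‖ ^ 2 ∧ ‖A x‖ ^ 2 ≤ (1 + δ) * ‖x‖ ^ 2

/-- The atomic "norm" induced by a set of atoms `A`: `‖x‖_A = inf {t ≥ 0 : x ∈ t·cl(conv A)}`,
with value `+∞` when no such `t` exists. -/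
def atomicNorm {H : Type*} [NormedAddCommGroup H] [NormedSpace ℝ H] (A : Set H) (x : H) :
    ℝ≥0∞ :=
  sInf {t : ℝ≥0∞ | ∃ r : ℝ, 0 ≤ r ∧ t = ENNReal.ofReal r ∧ x ∈ r • closure (convexHull ℝ A)}

/-- `‖·‖_Σ`, the atomic norm whose atoms are the unit-norm elements of `S`. -/
def sigmaNorm {H : Type*} [NormedAddCommGroup H] [NormedSpace ℝ H] (S : Set H) : H → ℝ≥0∞ :=
  atomicNorm (S ∩ {u : H | ‖u‖ = 1})

/-- `δ_Σ(x,z)`, with the convention that it is `0` when `‖x+z‖_Σ = +∞`. -/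
def deltaXZ (𝕜 : Type*) [RCLike 𝕜] {H : Type*} [NormedAddCommGroup H]
    [InnerProductSpace 𝕜 H] [NormedSpace ℝ H] (S : Set H) (x z : H) : ℝ :=
  if sigmaNorm S (x + z) = ⊤ then 0
  else (-(RCLike.re (inner 𝕜 x z : 𝕜))) /
    (‖x‖ * Real.sqrt ((sigmaNorm S (x + z)).toReal ^ 2 - ‖x‖ ^ 2
      - 2 * RCLike.re (inner 𝕜 x z : 𝕜)))

/-- The set of descent vectors of `f` at points of `S`. -/
def descentSet {H : Type*} [NormedAddCommGroup H] (S : Set H) (f : H → ℝ≥0∞) : Set H :=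
  {z | ∃ x ∈ S, f (x + z) ≤ f x}

/-- The admissibility condition on `x` in the supremum defining `δ_Σ(f)`:
`x ∈ Σ`, `x ≠ 0` and `‖x+z‖_Σ² - ‖x‖² - 2 Re⟪x,z⟫ > 0` (satisfied in particular
when `‖x+z‖_Σ = +∞`). -/
def deltaAdmissible (𝕜 : Type*) [RCLike 𝕜] {H : Type*} [NormedAddCommGroup H]
    [InnerProductSpace 𝕜 H] [NormedSpace ℝ H] (S : Set H) (z x : H) : Prop :=
  x ∈ S ∧ x ≠ 0 ∧
    (sigmaNorm S (x + z) = ⊤ ∨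
      0 < (sigmaNorm S (x + z)).toReal ^ 2 - ‖x‖ ^ 2 - 2 * RCLike.re (inner 𝕜 x z : 𝕜))

/-- The RIP constant `δ_Σ(f) = inf_{z ∈ T_f(Σ), z ≠ 0} sup_x δ_Σ(x,z)`. -/
def deltaSigma (𝕜 : Type*) [RCLike 𝕜] {H : Type*} [NormedAddCommGroup H]
    [InnerProductSpace 𝕜 H] [NormedSpace ℝ H] (S : Set H) (f : H → ℝ≥0∞) : ℝ :=
  sInf {d : ℝ | ∃ z ∈ descentSet S f, z ≠ 0 ∧
    d = sSup {c : ℝ | ∃ x : H, deltaAdmissible 𝕜 S z x ∧ c = deltaXZ 𝕜 S x z}}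

/-- `S` is a union of linear subspaces. -/
def IsUnionOfSubspaces (𝕜 : Type*) [RCLike 𝕜] {H : Type*} [NormedAddCommGroup H]
    [InnerProductSpace 𝕜 H] (S : Set H) : Prop :=
  ∃ 𝒮 : Set (Submodule 𝕜 H), S = ⋃ W ∈ 𝒮, (W : Set H)

theorem aux_smul_re {𝕜 : Type*} [RCLike 𝕜] {H : Type*} [NormedAddCommGroup H]
    [InnerProductSpace 𝕜 H] [NormedSpace ℝ H] [IsScalarTower ℝ 𝕜 H] (x y : H) (r : ℝ) :
    RCLike.re (inner 𝕜 x (r • y) : 𝕜) = r * RCLike.re (inner 𝕜 x y : 𝕜) := by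
  rw [RCLike.real_smul_eq_coe_smul (K := 𝕜), inner_smul_right, RCLike.re_ofReal_mul]

theorem aux_smul_mem {𝕜 : Type*} [RCLike 𝕜] {H : Type*} [NormedAddCommGroup H]
    [InnerProductSpace 𝕜 H] [NormedSpace ℝ H] [IsScalarTower ℝ 𝕜 H] {S : Set H}
    (hS : IsUnionOfSubspaces 𝕜 S) {x : H} (hx : x ∈ S) (c : ℝ) : c • x ∈ S := by
  obtain ⟨T, rfl⟩ := hS
  simp only [mem_iUnion] at hx ⊢
  obtain ⟨W, hW, hx⟩ := hx
  refine ⟨W, hW, ?_⟩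
  rw [RCLike.real_smul_eq_coe_smul (K := 𝕜)]
  exact W.smul_mem _ hx

theorem aux_key {𝕜 : Type*} [RCLike 𝕜] {H F : Type*}
    [NormedAddCommGroup H] [InnerProductSpace 𝕜 H]
    [NormedSpace ℝ H] [IsScalarTower ℝ 𝕜 H]
    [NormedAddCommGroup F] [InnerProductSpace 𝕜 F]
    {S : Set H} (hS : IsUnionOfSubspaces 𝕜 S) {d : ℝ} {A : H →L[𝕜] F}
    (hA : SatisfiesRIP A S d) {x u : H} (hx : x ∈ S) (hx0 : x ≠ 0) (hu : u ∈ S)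
    {s : ℝ} (hs : 0 < s) :
    RCLike.re (inner 𝕜 (A x) (A (u - x)) : 𝕜) - RCLike.re (inner 𝕜 x (u - x) : 𝕜)
      ≤ ‖x‖ / s * (d / 2) * (s ^ 2 + ‖u - x‖ ^ 2) := by
  have hn : 0 < ‖x‖ := norm_pos_iff.mpr hx0
  set c : ℝ := s / ‖x‖ with hc
  have hcpos : 0 < c := by positivity
  set v := u - x with hv
  have e1 : c • x + v = (c - 1) • x - (-1 : ℝ) • u := by rw [hv]; module
  have e2 : c • x - v = (c + 1) • x - u := by rw [hv]; module
  have h1 := (hA (c • x + v) ⟨_, aux_smul_mem hS hx (c - 1), _, aux_smul_mem hS hu (-1), e1⟩).2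
  have h2 := (hA (c • x - v) ⟨_, aux_smul_mem hS hx (c + 1), _, hu, e2⟩).1
  clear_value v
  have hAc : A (c • x) = (c : 𝕜) • A x := by
    rw [RCLike.real_smul_eq_coe_smul (K := 𝕜), map_smul]
  have hi : RCLike.re (inner 𝕜 (c • x) v : 𝕜) = c * RCLike.re (inner 𝕜 x v : 𝕜) := by
    rw [inner_re_symm, aux_smul_re, inner_re_symm]
  have hiA : RCLike.re (inner 𝕜 ((c : 𝕜) • A x) (A v) : 𝕜)
      = c * RCLike.re (inner 𝕜 (A x) (A v) : 𝕜) := by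
    rw [inner_re_symm, inner_smul_right, RCLike.re_ofReal_mul, inner_re_symm]
  have hcn : ‖c • x‖ = s := by
    rw [norm_smul, Real.norm_of_nonneg hcpos.le, hc]; field_simp
  rw [map_add, hAc, norm_add_sq (𝕜 := 𝕜), norm_add_sq (𝕜 := 𝕜), hi, hiA, hcn] at h1
  rw [map_sub, hAc, norm_sub_sq (𝕜 := 𝕜), norm_sub_sq (𝕜 := 𝕜), hi, hiA, hcn] at h2
  set P := RCLike.re (inner 𝕜 (A x) (A v) : 𝕜)
  set R := RCLike.re (inner 𝕜 x v : 𝕜)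
  have h3 : c * (P - R) ≤ (d / 2) * (s ^ 2 + ‖v‖ ^ 2) := by nlinarith
  have h4 : ‖x‖ / s * c = 1 := by rw [hc]; field_simp
  calc P - R = ‖x‖ / s * (c * (P - R)) := by rw [← mul_assoc, h4, one_mul]
    _ ≤ ‖x‖ / s * ((d / 2) * (s ^ 2 + ‖v‖ ^ 2)) := by gcongr
    _ = _ := by ring

theorem aux_hull {𝕜 : Type*} [RCLike 𝕜] {H F : Type*}
    [NormedAddCommGroup H] [InnerProductSpace 𝕜 H]
    [NormedSpace ℝ H] [IsScalarTower ℝ 𝕜 H]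
    [NormedAddCommGroup F] [InnerProductSpace 𝕜 F]
    {S : Set H} (hS : IsUnionOfSubspaces 𝕜 S) {d : ℝ} {A : H →L[𝕜] F}
    (hA : SatisfiesRIP A S d) {x z : H} (hx : x ∈ S) (hx0 : x ≠ 0)
    {s : ℝ} (hs : 0 < s) {r : ℝ}
    (hz : x + z ∈ r • closure (convexHull ℝ (S ∩ {u : H | ‖u‖ = 1}))) :
    RCLike.re (inner 𝕜 (A x) (A z) : 𝕜) - RCLike.re (inner 𝕜 x z : 𝕜)
      ≤ ‖x‖ / s * (d / 2) *
        (s ^ 2 + (r ^ 2 - ‖x‖ ^ 2 - 2 * RCLike.re (inner 𝕜 x z : 𝕜))) := by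
  obtain ⟨w, hw, hwz⟩ := hz
  simp only at hwz
  set k := ‖x‖ / s * (d / 2) with hk
  let φ : H → ℝ := fun w => r * RCLike.re (inner 𝕜 (A x) (A w) : 𝕜)
    - r * RCLike.re (inner 𝕜 x w : 𝕜) + 2 * r * k * RCLike.re (inner 𝕜 x w : 𝕜)
  have hφ : IsLinearMap ℝ φ := by
    constructor
    · intro a b
      simp only [φ, map_add, inner_add_right]; ring
    · intro c a
      have : A (c • a) = (c : 𝕜) • A a := by
        rw [RCLike.real_smul_eq_coe_smul (K := 𝕜), map_smul]
      simp only [φ, aux_smul_re, this, inner_smul_right, RCLike.re_ofReal_mul, smul_eq_mul]; ring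
  have hφc : Continuous φ := by
    have c1 : Continuous fun w : H => RCLike.re (inner 𝕜 (A x) (A w) : 𝕜) :=
      RCLike.continuous_re.comp (continuous_const.inner A.continuous)
    have c2 : Continuous fun w : H => RCLike.re (inner 𝕜 x w : 𝕜) :=
      RCLike.continuous_re.comp (continuous_const.inner continuous_id)
    exact ((continuous_const.mul c1).sub (continuous_const.mul c2)).add (continuous_const.mul c2)
  set M := k * (s ^ 2 + r ^ 2 + ‖x‖ ^ 2) + ‖A x‖ ^ 2 - ‖x‖ ^ 2 with hM
  have hsub : closure (convexHull ℝ (S ∩ {u : H | ‖u‖ = 1})) ⊆ {w | φ w ≤ M} := by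
    refine closure_minimal (convexHull_min ?_ (convex_halfSpace_le hφ M))
      (isClosed_le hφc continuous_const)
    rintro u ⟨hu, hu1⟩
    have hu1 : ‖u‖ = 1 := hu1
    have h := aux_key hS hA hx hx0 (aux_smul_mem hS hu r) hs
    have hAr : A (r • u) = (r : 𝕜) • A u := by
      rw [RCLike.real_smul_eq_coe_smul (K := 𝕜), map_smul]
    have hnr : ‖r • u‖ ^ 2 = r ^ 2 := by
      rw [norm_smul, hu1, mul_one, Real.norm_eq_abs, sq_abs]
    rw [norm_sub_sq (𝕜 := 𝕜), inner_re_symm (r • u), hnr, map_sub, inner_sub_right,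
      inner_sub_right, hAr, map_sub, map_sub, inner_smul_right, RCLike.re_ofReal_mul,
      aux_smul_re, inner_self_eq_norm_sq, inner_self_eq_norm_sq, ← hk] at h
    simp only [mem_ofPred_eq, φ, hM]
    linarith
  have h := hsub hw
  have hzz : z = r • w - x := by rw [hwz]; abel
  have hAr : A (r • w) = (r : 𝕜) • A w := by
    rw [RCLike.real_smul_eq_coe_smul (K := 𝕜), map_smul]
  rw [hzz, map_sub, inner_sub_right,
      inner_sub_right, hAr, map_sub, map_sub, inner_smul_right, RCLike.re_ofReal_mul,
      aux_smul_re, inner_self_eq_norm_sq, inner_self_eq_norm_sq]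
  simp only [mem_ofPred_eq, φ, hM] at h
  linarith

theorem aux_norm_le {H : Type*} [NormedAddCommGroup H] [NormedSpace ℝ H] (S : Set H) (y : H) :
    ENNReal.ofReal ‖y‖ ≤ sigmaNorm S y := by
  refine le_sInf ?_
  rintro t ⟨r, hr, rfl, w, hw, rfl⟩
  apply ENNReal.ofReal_le_ofReal
  have hsub : closure (convexHull ℝ (S ∩ {u : H | ‖u‖ = 1})) ⊆ Metric.closedBall 0 1 := by
    refine closure_minimal (convexHull_min ?_ (convex_closedBall _ _)) Metric.isClosed_closedBall
    rintro u ⟨_, hu1⟩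
    have hu1 : ‖u‖ = 1 := hu1
    simp [hu1]
  have h := hsub hw
  rw [mem_closedBall_zero_iff] at h
  simp only [norm_smul, Real.norm_of_nonneg hr]
  nlinarith

theorem aux_main {𝕜 : Type*} [RCLike 𝕜] {H F : Type*}
    [NormedAddCommGroup H] [InnerProductSpace 𝕜 H]
    [NormedSpace ℝ H] [IsScalarTower ℝ 𝕜 H]
    [NormedAddCommGroup F] [InnerProductSpace 𝕜 F]
    {S : Set H} (hS : IsUnionOfSubspaces 𝕜 S) {d : ℝ} (hd : 0 ≤ d) {A : H →L[𝕜] F}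
    (hA : SatisfiesRIP A S d) {x z : H} (hx : deltaAdmissible 𝕜 S z x) {d' : ℝ} (hdd : d < d')
    (hxz : d' < deltaXZ 𝕜 S x z) : (d' - d) * ‖z‖ ≤ Real.sqrt (1 + d) * ‖A z‖ := by
  obtain ⟨hxS, hx0, hadm⟩ := hx
  have htop : sigmaNorm S (x + z) ≠ ⊤ := by
    intro h
    rw [deltaXZ, if_pos h] at hxz
    linarith
  rw [deltaXZ, if_neg htop] at hxz
  have hD := hadm.resolve_left htop
  set N := (sigmaNorm S (x + z)).toReal with hN
  set R := RCLike.re (inner 𝕜 x z : 𝕜) with hR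
  set s := Real.sqrt (N ^ 2 - ‖x‖ ^ 2 - 2 * R) with hs
  have hspos : 0 < s := Real.sqrt_pos.mpr hD
  have hs2 : s ^ 2 = N ^ 2 - ‖x‖ ^ 2 - 2 * R := Real.sq_sqrt hD.le
  have hn : 0 < ‖x‖ := norm_pos_iff.mpr hx0
  have hN0 : 0 ≤ N := ENNReal.toReal_nonneg
  rw [lt_div_iff₀ (by positivity)] at hxz
  set P := RCLike.re (inner 𝕜 (A x) (A z) : 𝕜) with hP
  have hall : ∀ t : ℝ, N < t →
      P - R ≤ ‖x‖ / s * (d / 2) * (s ^ 2 + (t ^ 2 - ‖x‖ ^ 2 - 2 * R)) := by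
    intro t ht
    have : sigmaNorm S (x + z) < ENNReal.ofReal t := by
      rw [← ENNReal.ofReal_toReal htop]
      exact (ENNReal.ofReal_lt_ofReal_iff (by linarith)).mpr ht
    obtain ⟨_, ⟨r, hr, rfl, hmem⟩, hrt⟩ := sInf_lt_iff.mp this
    have hrt' : r < t := (ENNReal.ofReal_lt_ofReal_iff (by linarith)).mp hrt
    refine (aux_hull hS hA hxS hx0 hspos hmem).trans ?_
    gcongr
  have hlim : P - R ≤ ‖x‖ / s * (d / 2) * (s ^ 2 + (N ^ 2 - ‖x‖ ^ 2 - 2 * R)) := by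
    have hc : Continuous fun t : ℝ =>
        ‖x‖ / s * (d / 2) * (s ^ 2 + (t ^ 2 - ‖x‖ ^ 2 - 2 * R)) := by fun_prop
    refine ge_of_tendsto ((hc.tendsto N).mono_left (nhdsWithin_le_nhds (s := Ioi N))) ?_
    filter_upwards [self_mem_nhdsWithin] with t ht using hall t ht
  have h1 : P - R ≤ d * (‖x‖ * s) := by
    refine hlim.trans (le_of_eq ?_)
    rw [← hs2]; field_simp; ring
  have hAx : ‖A x‖ ≤ Real.sqrt (1 + d) * ‖x‖ := by
    have := (hA x ⟨x, hxS, (0 : ℝ) • x, aux_smul_mem hS hxS 0, by simp⟩).2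
    refine le_of_sq_le_sq ?_ (by positivity)
    rwa [mul_pow, Real.sq_sqrt (by linarith)]
  have hPb : -P ≤ ‖A x‖ * ‖A z‖ := by
    have := (abs_le.mp ((RCLike.abs_re_le_norm _).trans (norm_inner_le_norm (𝕜 := 𝕜) (A x) (A z)))).1
    linarith
  have h2 : ‖A x‖ * ‖A z‖ ≤ Real.sqrt (1 + d) * ‖x‖ * ‖A z‖ := by gcongr
  have h3 : ‖x‖ * ((d' - d) * s) ≤ ‖x‖ * (Real.sqrt (1 + d) * ‖A z‖) := by nlinarith
  have h4 := le_of_mul_le_mul_left h3 hn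
  have hzs : ‖z‖ ≤ s := by
    have hle : ‖x + z‖ ≤ N := by
      have := ENNReal.toReal_mono htop (aux_norm_le S (x + z))
      rwa [ENNReal.toReal_ofReal (norm_nonneg _)] at this
    refine le_of_sq_le_sq ?_ hspos.le
    have h5 : ‖x + z‖ ^ 2 ≤ N ^ 2 := by gcongr
    rw [norm_add_sq (𝕜 := 𝕜), ← hR] at h5
    rw [hs2]; linarith
  exact (mul_le_mul_of_nonneg_left hzs (by linarith)).trans h4

/-- under a RIP with constant `δ < δ_Σ(f)`, the decoder minimizing `f` under
the data-fit constraint is stable to noise, with a constant independent of `A`. -/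
theorem stmt1 {𝕜 : Type*} [RCLike 𝕜] {H F : Type*}
    [NormedAddCommGroup H] [InnerProductSpace 𝕜 H] [CompleteSpace H]
    [NormedSpace ℝ H] [IsScalarTower ℝ 𝕜 H]
    [NormedAddCommGroup F] [InnerProductSpace 𝕜 F] [CompleteSpace F]
    (S : Set H) (hS : IsUnionOfSubspaces 𝕜 S) (f : H → ℝ≥0∞)
    (hδpos : 0 < deltaSigma 𝕜 S f) (δ : ℝ) (hδ : δ < deltaSigma 𝕜 S f) :
    ∃ C : ℝ, 0 ≤ C ∧
      ∀ A : H →L[𝕜] F, SatisfiesRIP A S δ →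
        ∀ ε : ℝ, 0 ≤ ε → ∀ x ∈ S, ∀ e : F, ‖e‖ ≤ ε → ∀ xs : H,
          (‖A xs - (A x + e)‖ ≤ ε ∧ ∀ z : H, ‖A z - (A x + e)‖ ≤ ε → f xs ≤ f z) →
          ‖xs - x‖ ≤ C * (‖e‖ + ε) := by
  obtain ⟨d', hd1, hd2⟩ := exists_between (max_lt hδ hδpos)
  set d := max δ 0 with hd
  have hd0 : 0 ≤ d := le_max_right _ _
  refine ⟨Real.sqrt (1 + d) / (d' - d), div_nonneg (Real.sqrt_nonneg _) (by linarith), ?_⟩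
  intro A hA ε hε x hx e he xs ⟨hxs, hmin⟩
  have hA' : SatisfiesRIP A S d := by
    intro y hy
    obtain ⟨h1, h2⟩ := hA y hy
    have : δ ≤ d := le_max_left _ _
    have := sq_nonneg ‖y‖
    constructor <;> nlinarith
  have hAz : ‖A (xs - x)‖ ≤ ‖e‖ + ε := by
    have : A (xs - x) = e + (A xs - (A x + e)) := by rw [map_sub]; abel
    rw [this]
    exact (norm_add_le _ _).trans (by linarith)
  by_cases hz : xs - x = 0
  · rw [hz, norm_zero]
    have : 0 ≤ d' - d := by linarith
    positivity
  have hmem : xs - x ∈ descentSet S f := by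
    refine ⟨x, hx, ?_⟩
    rw [add_sub_cancel]
    exact hmin x (by simpa using he)
  have hbdd : BddBelow {d : ℝ | ∃ z ∈ descentSet S f, z ≠ 0 ∧
      d = sSup {c : ℝ | ∃ x : H, deltaAdmissible 𝕜 S z x ∧ c = deltaXZ 𝕜 S x z}} := by
    by_contra h
    have := Real.sInf_of_not_bddBelow h
    rw [deltaSigma, this] at hδpos
    exact lt_irrefl _ hδpos
  have hle : d' < sSup {c : ℝ | ∃ y : H, deltaAdmissible 𝕜 S (xs - x) y ∧
      c = deltaXZ 𝕜 S y (xs - x)} :=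
    hd2.trans_le (csInf_le hbdd ⟨_, hmem, hz, rfl⟩)
  have hne : {c : ℝ | ∃ y : H, deltaAdmissible 𝕜 S (xs - x) y ∧
      c = deltaXZ 𝕜 S y (xs - x)}.Nonempty := by
    by_contra h
    rw [not_nonempty_iff_eq_empty] at h
    rw [h, Real.sSup_empty] at hle
    linarith
  obtain ⟨_, ⟨y, hy, rfl⟩, hlt⟩ := exists_lt_of_lt_csSup hne hle
  have h := aux_main hS hd0 hA' hy hd1 hlt
  have hpos : 0 < d' - d := by linarith
  rw [div_mul_eq_mul_div, le_div_iff₀ hpos, mul_comm]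
  exact h.trans (mul_le_mul_of_nonneg_left hAz (Real.sqrt_nonneg _))
end
end

section
/- Let Σ be a structured-sparsity-in-levels model with J ≥ 2 levels in a Hilbert space H, and let f := f_w be the weighted group norm in levels with the adapted weights w_j = 1/√k_j. Suppose the continuous linear operator A : H → F satisfies the RIP on Σ−Σ with constant δ < 1/√(2+J). Then for every ε ≥ 0, every x ∈ H, and every e ∈ F with ‖e‖_F ≤ ε, any minimizer x* of f(z) over z ∈ H subject to ‖Az − (Ax+e)‖_F ≤ ε satisfies ‖x* − x‖_H ≤ C·(‖e‖_F + ε) + D·d_f(x,Σ), where C := (1+√(1+J))·√(1+δ)/(1 − δ√(2+J)) and D := 2√2·(1 + √(1+δ)·C). -/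
noncomputable section
open scoped ENNReal NNReal Pointwise RealInnerProductSpace
open Filter Set Classical MeasureTheory ProbabilityTheory

/-- The restriction `x_g` of `x` to the group of coordinates `g`. -/
def groupProj {H : Type*} [NormedAddCommGroup H] [InnerProductSpace ℝ H] {I : Type*}
    (e : I → H) (g : Finset I) (x : H) : H :=
  ∑ i ∈ g, ⟪x, e i⟫ • e i

/-- The restriction `x_T` of `x` to a set of groups `T`. -/
def groupRestrict {H : Type*} [NormedAddCommGroup H] [InnerProductSpace ℝ H] {I : Type*}
    (e : I → H) (T : Finset (Finset I)) (x : H) : H :=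
  ∑ g ∈ T, groupProj e g x

/-- The `k`-group-sparse model `Σ_k` associated to the group collection `G`. -/
def kGroupSparse {H : Type*} [NormedAddCommGroup H] [InnerProductSpace ℝ H] {I : Type*}
    (e : I → H) (G : Finset (Finset I)) (k : ℕ) : Set H :=
  {x | ∃ T ⊆ G, T.card ≤ k ∧ x = groupRestrict e T x}

/-- The structured-sparsity-in-levels model: sums of one `k_j`-group-sparse vector
per level `j`. -/
def sparsityInLevels {H : Type*} [NormedAddCommGroup H] [InnerProductSpace ℝ H] {I : Type*}
    (e : I → H) {J : ℕ} (G : Fin J → Finset (Finset I)) (k : Fin J → ℕ) : Set H :=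
  {x | ∃ c : Fin J → H, (∀ j, c j ∈ kGroupSparse e (G j) (k j)) ∧ x = ∑ j, c j}

/-- The weighted group norm in levels `f_w(x) = Σ_j w_j Σ_{g ∈ G_j} ‖x_g‖`, extended by `+∞`
off the span of the coordinates covered by the groups. -/
def fwLevels {H : Type*} [NormedAddCommGroup H] [InnerProductSpace ℝ H] {I : Type*}
    (e : I → H) {J : ℕ} (G : Fin J → Finset (Finset I)) (w : Fin J → ℝ) (x : H) : ℝ≥0∞ :=
  if x ∈ Submodule.span ℝ (e '' {i : I | ∃ j, ∃ g ∈ G j, i ∈ g})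
  then ENNReal.ofReal (∑ j, w j * ∑ g ∈ G j, ‖groupProj e g x‖)
  else ⊤

/-- The (symmetrized) modeling-error distance `d_f(x, Σ)`. -/
def distF {H : Type*} [NormedAddCommGroup H] (f : H → ℝ≥0∞) (S : Set H) (x : H) : ℝ≥0∞ :=
  ⨅ x' ∈ S, (f (x - x') + f (x' - x)) / 2


theorem aux_hyper {ι E : Type*} [AddCommGroup E] [Module ℝ E] (U : Finset ι) (q : ι → E) (k : ℕ) :
    ∀ (n : ℕ) (θ : ι → ℝ), (∀ g ∈ U, 0 ≤ θ g ∧ θ g ≤ 1) → ∑ g ∈ U, θ g ≤ k →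
      (U.filter (fun g => 0 < θ g ∧ θ g < 1)).card ≤ n →
      ∑ g ∈ U, θ g • q g ∈ convexHull ℝ {x | ∃ S ⊆ U, S.card ≤ k ∧ x = ∑ g ∈ S, q g} := by
  intro n
  induction n with
  | zero =>
    intro θ h01 hs hc
    have hfe : ∀ g ∈ U, θ g = if θ g = 1 then 1 else 0 := by
      intro g hg
      have h0 := Finset.filter_eq_empty_iff.1 (Finset.card_eq_zero.1 (Nat.le_zero.1 hc)) hg
      have := h01 g hg
      split_ifs with h1
      · exact h1
      · by_contra h2
        exact h0 ⟨lt_of_le_of_ne this.1 (Ne.symm h2), lt_of_le_of_ne this.2 h1⟩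
    apply subset_convexHull
    refine ⟨U.filter (fun g => θ g = 1), Finset.filter_subset _ _, ?_, ?_⟩
    · rw [Finset.sum_congr rfl hfe, Finset.sum_boole] at hs
      exact_mod_cast hs
    · rw [Finset.sum_filter]
      refine Finset.sum_congr rfl fun g hg => ?_
      have h2 := hfe g hg
      split_ifs at h2 ⊢ with h3
      · rw [h2, one_smul]
      · rw [h2, zero_smul]
  | succ n ih =>
    intro θ h01 hs hc
    by_cases hle : (U.filter (fun g => 0 < θ g ∧ θ g < 1)).card ≤ n
    · exact ih θ h01 hs hle
    have key : ∀ θ' : ι → ℝ, (∀ g ∈ U, 0 ≤ θ' g ∧ θ' g ≤ 1) → ∑ g ∈ U, θ' g ≤ k →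
        (∀ g ∈ U, 0 < θ' g ∧ θ' g < 1 → 0 < θ g ∧ θ g < 1) →
        (∃ g ∈ U, (0 < θ g ∧ θ g < 1) ∧ ¬ (0 < θ' g ∧ θ' g < 1)) →
        ∑ g ∈ U, θ' g • q g ∈ convexHull ℝ {x | ∃ S ⊆ U, S.card ≤ k ∧ x = ∑ g ∈ S, q g} := by
      intro θ' h1 h2 h3 ⟨g, hg, h4, h5⟩
      apply ih θ' h1 h2
      have : (U.filter (fun g => 0 < θ' g ∧ θ' g < 1)).card
          < (U.filter (fun g => 0 < θ g ∧ θ g < 1)).card := by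
        apply Finset.card_lt_card
        rw [Finset.ssubset_iff_of_subset]
        · exact ⟨g, by simp [hg, h4], by simpa [hg] using h5⟩
        · intro x hx
          simp only [Finset.mem_filter] at hx ⊢
          exact ⟨hx.1, h3 x hx.1 hx.2⟩
      omega
    have hne : (U.filter (fun g => 0 < θ g ∧ θ g < 1)).Nonempty := by
      rw [← Finset.card_pos]; omega
    obtain ⟨u, hu⟩ := hne
    simp only [Finset.mem_filter] at hu
    obtain ⟨huU, hu0, hu1⟩ := hu
    by_cases hv : ∃ v ∈ U, v ≠ u ∧ 0 < θ v ∧ θ v < 1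
    · obtain ⟨v, hvU, hvu, hv0, hv1⟩ := hv
      -- move along e_u - e_v
      have sum_upd : ∀ c : ℝ, ∑ g ∈ U, (θ g + c * ((if g = u then 1 else 0) - (if g = v then 1 else 0)))
          = ∑ g ∈ U, θ g := by
        intro c
        rw [Finset.sum_add_distrib, ← Finset.mul_sum, Finset.sum_sub_distrib]
        simp [huU, hvU]
      have H : ∀ c : ℝ, 0 ≤ θ u + c → θ u + c ≤ 1 → 0 ≤ θ v - c → θ v - c ≤ 1 →
          (¬ (0 < θ u + c ∧ θ u + c < 1) ∨ ¬ (0 < θ v - c ∧ θ v - c < 1)) →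
          ∑ g ∈ U, (θ g + c * ((if g = u then 1 else 0) - (if g = v then 1 else 0))) • q g ∈
            convexHull ℝ {x | ∃ S ⊆ U, S.card ≤ k ∧ x = ∑ g ∈ S, q g} := by
        intro c a1 a2 a3 a4 a5
        apply key
        · intro g hg
          by_cases e1 : g = u
          · subst e1; simp [Ne.symm hvu, a1, a2]
          · by_cases e2 : g = v
            · subst e2; simp [hvu]; constructor <;> linarith
            · simpa [e1, e2] using h01 g hg
        · rw [sum_upd]; exact hs
        · intro g hg
          by_cases e1 : g = u
          · subst e1; intro _; exact ⟨hu0, hu1⟩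
          · by_cases e2 : g = v
            · subst e2; intro _; exact ⟨hv0, hv1⟩
            · simp [e1, e2]
        · rcases a5 with a5 | a5
          · exact ⟨u, huU, ⟨hu0, hu1⟩, by simpa [Ne.symm hvu] using a5⟩
          · exact ⟨v, hvU, ⟨hv0, hv1⟩, by simpa [hvu, sub_eq_add_neg] using a5⟩
      have hs0 : 0 < min (1 - θ u) (θ v) := lt_min (by linarith) hv0
      have hr0 : 0 < min (θ u) (1 - θ v) := lt_min hu0 (by linarith)
      obtain ⟨s, hsd⟩ : ∃ s, s = min (1 - θ u) (θ v) := ⟨_, rfl⟩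
      obtain ⟨r, hrd⟩ : ∃ r, r = min (θ u) (1 - θ v) := ⟨_, rfl⟩
      rw [← hsd] at hs0
      rw [← hrd] at hr0
      have m1 := H s (by linarith) (by linarith [min_le_left (1 - θ u) (θ v)])
        (by linarith [min_le_right (1 - θ u) (θ v)]) (by linarith) (by
          rcases min_choice (1 - θ u) (θ v) with h | h
          · left; rintro ⟨_, h'⟩; linarith
          · right; rintro ⟨h', _⟩; linarith)
      have m2 := H (-r) (by linarith [min_le_left (θ u) (1 - θ v)]) (by linarith)
        (by linarith) (by linarith [min_le_right (θ u) (1 - θ v)]) (by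
          rcases min_choice (θ u) (1 - θ v) with h | h
          · left; rintro ⟨h', _⟩; linarith
          · right; rintro ⟨_, h'⟩; linarith)
      have := (convex_convexHull ℝ _) m1 m2 (a := r / (r + s)) (b := s / (r + s))
        (by positivity) (by positivity) (by field_simp)
      convert this using 1
      rw [Finset.smul_sum, Finset.smul_sum, ← Finset.sum_add_distrib]
      refine Finset.sum_congr rfl fun g _ => ?_
      rw [smul_smul, smul_smul, ← add_smul]
      congr 1
      field_simp
      ring
    · push Not at hv
      have hfe : ∀ g ∈ U.erase u, θ g = if θ g = 1 then 1 else 0 := by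
        intro g hg
        rw [Finset.mem_erase] at hg
        have h3 := h01 g hg.2
        split_ifs with h1
        · exact h1
        · by_contra h2
          exact absurd (lt_of_le_of_ne h3.2 h1) (not_lt.2 (hv g hg.2 hg.1 (lt_of_le_of_ne h3.1 (Ne.symm h2))))
      have hsum : ∀ c : ℝ, ∑ g ∈ U, (if g = u then c else θ g) = c + ∑ g ∈ U.erase u, θ g := by
        intro c
        rw [← Finset.add_sum_erase _ _ huU]
        simp only [if_true]
        congr 1
        exact Finset.sum_congr rfl fun g hg => by rw [if_neg (Finset.ne_of_mem_erase hg)]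
      have hint : (1 : ℝ) + ∑ g ∈ U.erase u, θ g ≤ k := by
        rw [← Finset.add_sum_erase _ _ huU] at hs
        rw [Finset.sum_congr rfl hfe, Finset.sum_boole] at hs ⊢
        have : (((U.erase u).filter (fun g => θ g = 1)).card : ℝ) < k := by linarith
        have h' : ((U.erase u).filter (fun g => θ g = 1)).card < k := by exact_mod_cast this
        have h'' : 1 + ((U.erase u).filter (fun g => θ g = 1)).card ≤ k := by omega
        exact_mod_cast h''
      have H : ∀ c : ℝ, (c = 0 ∨ c = 1) → ∑ g ∈ U, (if g = u then c else θ g) • q g ∈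
            convexHull ℝ {x | ∃ S ⊆ U, S.card ≤ k ∧ x = ∑ g ∈ S, q g} := by
        intro c hc
        apply key
        · intro g hg
          split_ifs
          · rcases hc with rfl | rfl <;> simp
          · exact h01 g hg
        · rw [hsum]; rcases hc with rfl | rfl <;> linarith
        · intro g hg
          split_ifs with h1
          · subst h1; intro _; exact ⟨hu0, hu1⟩
          · exact id
        · refine ⟨u, huU, ⟨hu0, hu1⟩, ?_⟩
          rcases hc with rfl | rfl <;> simp
      have := (convex_convexHull ℝ _) (H 1 (Or.inr rfl)) (H 0 (Or.inl rfl)) (a := θ u) (b := 1 - θ u)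
        hu0.le (by linarith) (by ring)
      convert this using 1
      rw [Finset.smul_sum, Finset.smul_sum, ← Finset.sum_add_distrib]
      refine Finset.sum_congr rfl fun g _ => ?_
      rw [smul_smul, smul_smul, ← add_smul]
      congr 1
      split_ifs with h1
      · subst h1; ring
      · ring

theorem aux_top {ι : Type*} (G : Finset ι) (b : ι → ℝ) (hb : ∀ g, 0 ≤ b g) (k : ℕ) (hk : 0 < k) :
    ∃ T ⊆ G, T.card ≤ k ∧ (∀ S ⊆ G, S.card ≤ k → ∑ g ∈ S, b g ≤ ∑ g ∈ T, b g) ∧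
      ∃ m : ℝ, 0 ≤ m ∧ (∀ g ∈ G, g ∉ T → b g ≤ m) ∧ k * m ≤ ∑ g ∈ T, b g ∧
        k * m ^ 2 ≤ ∑ g ∈ T, b g ^ 2 := by
  by_cases hG : G.card ≤ k
  · refine ⟨G, subset_rfl, hG, fun S hS _ => Finset.sum_le_sum_of_subset_of_nonneg hS fun g _ _ => hb g,
      0, le_rfl, fun g hg hn => absurd hg hn, ?_, ?_⟩
    · simpa using Finset.sum_nonneg fun g _ => hb g
    · simpa using Finset.sum_nonneg fun g _ => sq_nonneg (b g)
  push Not at hG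
  obtain ⟨T, hT, hmax⟩ := Finset.exists_max_image (G.powersetCard k) (fun T => ∑ g ∈ T, b g)
    (Finset.powersetCard_nonempty.2 hG.le)
  rw [Finset.mem_powersetCard] at hT
  obtain ⟨hTG, hTc⟩ := hT
  have hTne : T.Nonempty := by rw [← Finset.card_pos]; omega
  obtain ⟨g0, hg0, hmin⟩ := Finset.exists_min_image T b hTne
  refine ⟨T, hTG, hTc.le, ?_, b g0, hb g0, ?_, ?_, ?_⟩
  · intro S hS hSc
    obtain ⟨S', h1, h2, h3⟩ := Finset.exists_subsuperset_card_eq hS hSc hG.le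
    exact (Finset.sum_le_sum_of_subset_of_nonneg h1 fun g _ _ => hb g).trans
      (hmax S' (Finset.mem_powersetCard.2 ⟨h2, h3⟩))
  · intro g hg1 hg2
    have hg : g ∈ G ∧ g ∉ T := ⟨hg1, hg2⟩
    have hn : g ∉ T.erase g0 := fun h => hg.2 (Finset.mem_of_mem_erase h)
    have := hmax (insert g (T.erase g0)) (by
      rw [Finset.mem_powersetCard]
      constructor
      · intro x hx
        rcases Finset.mem_insert.1 hx with rfl | hx
        · exact hg.1
        · exact hTG (Finset.mem_of_mem_erase hx)
      · rw [Finset.card_insert_of_notMem hn, Finset.card_erase_of_mem hg0]; omega)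
    rw [Finset.sum_insert hn, ← Finset.add_sum_erase T b hg0] at this
    linarith
  · have := Finset.card_nsmul_le_sum T b (b g0) hmin
    rwa [hTc, nsmul_eq_mul] at this
  · have := Finset.card_nsmul_le_sum T (fun g => b g ^ 2) (b g0 ^ 2)
      (fun g hg => pow_le_pow_left₀ (hb _) (hmin g hg) 2)
    rwa [hTc, nsmul_eq_mul] at this

section aux
variable {H F : Type*} [NormedAddCommGroup H] [InnerProductSpace ℝ H]
  [NormedAddCommGroup F] [InnerProductSpace ℝ F] {I : Type*}

/-- linear version of `groupProj` -/
def gpL (e : I → H) (g : Finset I) : H →ₗ[ℝ] H where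
  toFun := groupProj e g
  map_add' x y := by
    simp [groupProj, inner_add_left, add_smul, Finset.sum_add_distrib]
  map_smul' c x := by
    simp [groupProj, inner_smul_left, Finset.smul_sum, smul_smul]

theorem gpL_apply (e : I → H) (g : Finset I) (x : H) : gpL e g x = groupProj e g x := rfl

theorem inner_gp (e : I → H) (he : Orthonormal ℝ e) (g : Finset I) (x : H) (i : I) :
    ⟪gpL e g x, e i⟫ = if i ∈ g then ⟪x, e i⟫ else 0 := by
  rw [gpL_apply, groupProj, sum_inner]
  simp only [inner_smul_left, orthonormal_iff_ite.1 he]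
  simp

theorem gp_self (e : I → H) (he : Orthonormal ℝ e) (g : Finset I) (x : H) :
    gpL e g (gpL e g x) = gpL e g x := by
  conv_lhs => rw [gpL_apply, groupProj]
  conv_rhs => rw [gpL_apply, groupProj]
  refine Finset.sum_congr rfl fun i hi => ?_
  rw [inner_gp e he, if_pos hi]

theorem gp_disj (e : I → H) (he : Orthonormal ℝ e) (g g' : Finset I) (h : Disjoint g g') (x : H) :
    gpL e g (gpL e g' x) = 0 := by
  conv_lhs => rw [gpL_apply, groupProj]
  refine Finset.sum_eq_zero fun i hi => ?_
  rw [inner_gp e he, if_neg (Finset.disjoint_left.1 h hi), zero_smul]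

theorem gp_orth (e : I → H) (he : Orthonormal ℝ e) (g g' : Finset I) (h : Disjoint g g') (x y : H) :
    ⟪gpL e g x, gpL e g' y⟫ = 0 := by
  rw [gpL_apply e g', groupProj, inner_sum]
  refine Finset.sum_eq_zero fun i hi => ?_
  rw [inner_smul_right, inner_gp e he, if_neg (Finset.disjoint_right.1 h hi), mul_zero]

theorem norm_sum_sq_orth {ι : Type*} (s : Finset ι) (v : ι → H)
    (h : ∀ i ∈ s, ∀ j ∈ s, i ≠ j → ⟪v i, v j⟫ = 0) : ‖∑ i ∈ s, v i‖ ^ 2 = ∑ i ∈ s, ‖v i‖ ^ 2 := by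
  rw [← real_inner_self_eq_norm_sq, sum_inner]
  refine Finset.sum_congr rfl fun i hi => ?_
  rw [inner_sum, Finset.sum_eq_single i, real_inner_self_eq_norm_sq]
  · intro j hj hji; exact h i hi j hj (Ne.symm hji)
  · intro h; exact absurd hi h

theorem sparse_mem (e : I → H) (he : Orthonormal ℝ e) (G : Finset (Finset I)) (k : ℕ)
    (hdisj : ∀ g ∈ G, ∀ g' ∈ G, g ≠ g' → Disjoint g g') (S : Finset (Finset I)) (hS : S ⊆ G)
    (hc : S.card ≤ k) (c : Finset I → ℝ) (h : H) :
    ∑ g ∈ S, c g • gpL e g h ∈ kGroupSparse e G k := by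
  refine ⟨S, hS, hc, ?_⟩
  rw [groupRestrict]
  refine Finset.sum_congr rfl fun g hg => ?_
  rw [← gpL_apply, map_sum, Finset.sum_eq_single g]
  · rw [map_smul, gp_self e he]
  · intro g' hg' hne
    rw [map_smul, gp_disj e he _ _ (hdisj g (hS hg) g' (hS hg') (Ne.symm hne)), smul_zero]
  · intro h; exact absurd hg h

theorem aux_dm (a b : ℝ) (ha : 0 ≤ a) : a / b * b ≤ a := by
  by_cases hb : b = 0
  · simp [hb, ha]
  · rw [div_mul_cancel₀ _ hb]

theorem sum_sq_aux {ι : Type*} (s : Finset ι) (f : ι → ℝ) (hf : ∀ i ∈ s, 0 ≤ f i) :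
    ∑ i ∈ s, f i ^ 2 ≤ (∑ i ∈ s, f i) ^ 2 := by
  rw [sq (∑ i ∈ s, f i), Finset.sum_mul]
  refine Finset.sum_le_sum fun i hi => ?_
  rw [sq]
  exact mul_le_mul_of_nonneg_left (Finset.single_le_sum hf hi) (hf i hi)

theorem level_hull (e : I → H) (he : Orthonormal ℝ e) (G : Finset (Finset I)) (k : ℕ)
    (hdisj : ∀ g ∈ G, ∀ g' ∈ G, g ≠ g' → Disjoint g g') (U : Finset (Finset I)) (hU : U ⊆ G)
    (h : H) (a : ℝ) (ha : 0 ≤ a) (h1 : ∀ g ∈ U, ‖gpL e g h‖ ≤ a)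
    (h2 : ∑ g ∈ U, ‖gpL e g h‖ ≤ k * a) :
    ∑ g ∈ U, gpL e g h ∈ convexHull ℝ (kGroupSparse e G k ∩ {s | ‖s‖ ^ 2 ≤ k * a ^ 2}) := by
  have hm := aux_hyper U (fun g => (a / ‖gpL e g h‖) • gpL e g h) k _ (fun g => ‖gpL e g h‖ / a)
    (fun g hg => ⟨by positivity, div_le_one_of_le₀ (h1 g hg) ha⟩)
    (by rw [← Finset.sum_div]; exact div_le_of_le_mul₀ ha (by positivity) h2) le_rfl
  have he1 : ∑ g ∈ U, (‖gpL e g h‖ / a) • ((a / ‖gpL e g h‖) • gpL e g h) = ∑ g ∈ U, gpL e g h := by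
    refine Finset.sum_congr rfl fun g hg => ?_
    by_cases h0 : gpL e g h = 0
    · simp [h0]
    have hn : 0 < ‖gpL e g h‖ := norm_pos_iff.2 h0
    have ha' : 0 < a := hn.trans_le (h1 g hg)
    rw [smul_smul]
    have : ‖gpL e g h‖ / a * (a / ‖gpL e g h‖) = 1 := by field_simp
    rw [this, one_smul]
  rw [he1] at hm
  refine convexHull_mono ?_ hm
  rintro x ⟨S, hS, hc, rfl⟩
  refine ⟨sparse_mem e he G k hdisj S (hS.trans hU) hc _ h, ?_⟩
  simp only [Set.mem_ofPred_eq]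
  rw [norm_sum_sq_orth]
  · calc ∑ g ∈ S, ‖(a / ‖gpL e g h‖) • gpL e g h‖ ^ 2 ≤ ∑ g ∈ S, a ^ 2 := by
          refine Finset.sum_le_sum fun g hg => ?_
          refine pow_le_pow_left₀ (norm_nonneg _) ?_ 2
          rw [norm_smul, norm_div, norm_norm, Real.norm_of_nonneg ha]
          exact aux_dm a _ ha
      _ = S.card * a ^ 2 := by simp
      _ ≤ k * a ^ 2 := by gcongr
  · intro g hg g' hg' hne
    rw [inner_smul_left, inner_smul_right, gp_orth e he _ _ (hdisj g (hU (hS hg)) g' (hU (hS hg')) hne)]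
    simp

theorem sparse_orth (e : I → H) (he : Orthonormal ℝ e) (G G' : Finset (Finset I)) (k k' : ℕ)
    (hd : ∀ g ∈ G, ∀ g' ∈ G', Disjoint g g') (x y : H) (hx : x ∈ kGroupSparse e G k)
    (hy : y ∈ kGroupSparse e G' k') : ⟪x, y⟫ = 0 := by
  obtain ⟨T, hT, -, hx⟩ := hx
  obtain ⟨T', hT', -, hy⟩ := hy
  rw [hx, hy, groupRestrict, groupRestrict, sum_inner]
  refine Finset.sum_eq_zero fun g hg => ?_
  rw [inner_sum]
  exact Finset.sum_eq_zero fun g' hg' => gp_orth e he _ _ (hd g (hT hg) g' (hT' hg')) _ _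

theorem levels_hull (e : I → H) (he : Orthonormal ℝ e) {J : ℕ}
    (G : Fin J → Finset (Finset I)) (k : Fin J → ℕ)
    (hd : ∀ j j', j ≠ j' → ∀ g ∈ G j, ∀ g' ∈ G j', Disjoint g g')
    (t : Fin J → H) (r : Fin J → ℝ) (R : ℝ) (hR : 0 ≤ R)
    (ht : ∀ j, t j ∈ convexHull ℝ (kGroupSparse e (G j) (k j) ∩ {s | ‖s‖ ^ 2 ≤ r j}))
    (hr : ∑ j, r j ≤ R ^ 2) :
    ∑ j, t j ∈ convexHull ℝ (sparsityInLevels e G k ∩ {s | ‖s‖ ≤ R}) := by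
  have h1 : ∑ j, t j ∈ ∑ j, convexHull ℝ (kGroupSparse e (G j) (k j) ∩ {s | ‖s‖ ^ 2 ≤ r j}) :=
    by
    rw [Set.mem_finsetSum]
    exact ⟨t, fun {j} _ => ht j, rfl⟩
  rw [← convexHull_sum] at h1
  refine convexHull_mono ?_ h1
  intro s hs
  rw [Set.mem_finsetSum] at hs
  obtain ⟨c, hc, rfl⟩ := hs
  refine ⟨⟨c, fun j => (hc (Finset.mem_univ j)).1, rfl⟩, ?_⟩
  simp only [Set.mem_ofPred_eq]
  refine le_of_sq_le_sq ?_ hR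
  rw [norm_sum_sq_orth]
  · exact (Finset.sum_le_sum fun j _ => (hc (Finset.mem_univ j)).2).trans hr
  · intro j _ j' _ hne
    exact sparse_orth e he _ _ _ _ (hd j j' hne) _ _ (hc (Finset.mem_univ j)).1 (hc (Finset.mem_univ j')).1

set_option maxHeartbeats 2000000 in
theorem core (A : H →L[ℝ] F) (S : Set H) (hS : ∀ s ∈ S, ∀ c : ℝ, c • s ∈ S) (δ : ℝ) (J : ℕ)
    (hδ : δ < 1 / Real.sqrt (2 + J)) (hRIP : SatisfiesRIP A S δ) (C D : ℝ)
    (hC : C = (1 + Real.sqrt (1 + J)) * Real.sqrt (1 + δ) / (1 - δ * Real.sqrt (2 + J)))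
    (hD : D = 2 * Real.sqrt 2 * (1 + Real.sqrt (1 + δ) * C))
    (y t : H) (hy : y ∈ S) (R : ℝ) (ht : t ∈ convexHull ℝ (S ∩ {s | ‖s‖ ≤ R}))
    (hyt : ⟪t, y⟫ = 0) (μ η : ℝ) (hμ : 0 ≤ μ) (hμ1 : μ ≤ 1)
    (h1 : μ * R ≤ Real.sqrt (1 + J) * ‖y‖) (h2 : (1 - μ) * R ≤ 2 * Real.sqrt 2 * η) (hη : 0 ≤ η) :
    ‖y + t‖ ≤ C * ‖A (y + t)‖ + D * η := by
  have hγ : 0 < Real.sqrt (2 + J) := by positivity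
  have hden : 0 < 1 - δ * Real.sqrt (2 + J) := by
    rw [lt_div_iff₀ hγ] at hδ; linarith
  have hC0 : 0 ≤ C := by rw [hC]; positivity
  have hD0 : 0 ≤ D := by rw [hD]; positivity
  have h0S : (0 : H) ∈ S := by simpa using hS y hy 0
  have hRS : ∀ s ∈ S, (1 - δ) * ‖s‖ ^ 2 ≤ ‖A s‖ ^ 2 ∧ ‖A s‖ ^ 2 ≤ (1 + δ) * ‖s‖ ^ 2 :=
    fun s hs => hRIP s ⟨s, hs, 0, h0S, by simp⟩
  by_cases hδ0 : δ < 0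
  · have hz : ∀ s ∈ S, s = 0 := by
      intro s hs
      have := hRS s hs
      by_contra hne
      have : 0 < ‖s‖ := norm_pos_iff.2 hne
      nlinarith [pow_pos this 2]
    have ht0 : t = 0 := by
      have : convexHull ℝ (S ∩ {s | ‖s‖ ≤ R}) ⊆ {0} :=
        convexHull_min (fun s hs => hz s hs.1) (convex_singleton 0)
      exact this ht
    rw [hz y hy, ht0]
    simp; positivity
  push Not at hδ0
  have hsq : 0 ≤ Real.sqrt (1 + δ) := Real.sqrt_nonneg _
  have hAS : ∀ s ∈ S, ‖A s‖ ≤ Real.sqrt (1 + δ) * ‖s‖ := by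
    intro s hs
    refine le_of_sq_le_sq ?_ (by positivity)
    rw [mul_pow, Real.sq_sqrt (by linarith)]
    exact (hRS s hs).2
  have hAt : ‖A t‖ ≤ Real.sqrt (1 + δ) * R := by
    have : convexHull ℝ (S ∩ {s | ‖s‖ ≤ R}) ⊆ A ⁻¹' Metric.closedBall 0 (Real.sqrt (1 + δ) * R) := by
      refine convexHull_min ?_ ((convex_closedBall _ _).linear_preimage A.toLinearMap)
      intro s hs
      simp only [mem_preimage, mem_closedBall_zero_iff]
      exact (hAS s hs.1).trans (mul_le_mul_of_nonneg_left hs.2 hsq)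
    simpa using this ht
  have htR : ‖t‖ ≤ R := by
    have : convexHull ℝ (S ∩ {s | ‖s‖ ≤ R}) ⊆ Metric.closedBall 0 R := by
      refine convexHull_min ?_ (convex_closedBall _ _)
      intro s hs
      simpa using hs.2
    simpa using this ht
  have hR0 : 0 ≤ R := (norm_nonneg _).trans htR
  set γ := Real.sqrt (2 + J) with hγd
  have hγ2 : γ ^ 2 = 2 + J := Real.sq_sqrt (by positivity)
  have hJ2 : Real.sqrt (1 + J) ^ 2 = 1 + J := Real.sq_sqrt (by positivity)
  -- the affine inequality
  have haff : ∀ s ∈ S ∩ {s | ‖s‖ ≤ R},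
      (1 * (4 * γ * ‖y‖ ^ 2 - 2 * δ * ((μ * R) ^ 2 + (1 + γ ^ 2) * ‖y‖ ^ 2)) - 4 * γ * ‖A y‖ ^ 2)
        ≤ 4 * γ * μ * ⟪A s, A y⟫ - μ * (2 * (1 - δ) * (1 + γ) + 2 * (1 + δ) * (γ - 1)) * ⟪s, y⟫ := by
    rintro s ⟨hs, hsR⟩
    have r1 := (hRIP (μ • s + (1 + γ) • y) ⟨μ • s, hS s hs μ, -(1 + γ) • y, hS y hy _, by
      rw [neg_smul, sub_neg_eq_add]⟩).1
    have r2 := (hRIP (μ • s - (γ - 1) • y) ⟨μ • s, hS s hs μ, (γ - 1) • y, hS y hy _, rfl⟩).2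
    rw [map_add, map_smul, map_smul, norm_add_sq_real, norm_add_sq_real] at r1
    rw [map_sub, map_smul, map_smul, norm_sub_sq_real, norm_sub_sq_real] at r2
    simp only [norm_smul, mul_pow, real_inner_smul_left, real_inner_smul_right, Real.norm_eq_abs, sq_abs] at r1 r2
    have hs2 : δ * (μ ^ 2 * ‖s‖ ^ 2) ≤ δ * (μ ^ 2 * R ^ 2) := by
      have : ‖s‖ ≤ R := hsR
      gcongr
    simp only [mul_pow]
    nlinarith [r1, r2, hs2]
  have hT : (1 * (4 * γ * ‖y‖ ^ 2 - 2 * δ * ((μ * R) ^ 2 + (1 + γ ^ 2) * ‖y‖ ^ 2)) - 4 * γ * ‖A y‖ ^ 2)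
        ≤ 4 * γ * μ * ⟪A t, A y⟫ - μ * (2 * (1 - δ) * (1 + γ) + 2 * (1 + δ) * (γ - 1)) * ⟪t, y⟫ := by
    have hcv : Convex ℝ {s : H | (1 * (4 * γ * ‖y‖ ^ 2 - 2 * δ * ((μ * R) ^ 2 + (1 + γ ^ 2) * ‖y‖ ^ 2)) - 4 * γ * ‖A y‖ ^ 2)
        ≤ 4 * γ * μ * ⟪A s, A y⟫ - μ * (2 * (1 - δ) * (1 + γ) + 2 * (1 + δ) * (γ - 1)) * ⟪s, y⟫} := by
      apply convex_halfSpace_ge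
      constructor
      · intro a b
        simp only [map_add, inner_add_left]; ring
      · intro c a
        simp only [map_smul, real_inner_smul_left, smul_eq_mul]; ring
    exact convexHull_min haff hcv ht
  rw [hyt, mul_zero, sub_zero] at hT
  -- z = y + μ t
  have hz : ⟪A (y + μ • t), A y⟫ = ‖A y‖ ^ 2 + μ * ⟪A t, A y⟫ := by
    rw [map_add, map_smul, inner_add_left, real_inner_smul_left, real_inner_self_eq_norm_sq]
  have hμR2 : (μ * R) ^ 2 ≤ (1 + J) * ‖y‖ ^ 2 := by
    rw [← hJ2, ← mul_pow]
    exact pow_le_pow_left₀ (by positivity) h1 2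
  have hlow : (1 - δ * γ) * ‖y‖ ^ 2 ≤ ⟪A (y + μ • t), A y⟫ := by
    have h3 : δ * (μ * R) ^ 2 ≤ δ * ((1 + J) * ‖y‖ ^ 2) := by gcongr
    have h4 : 4 * γ * ((1 - δ * γ) * ‖y‖ ^ 2) ≤ 4 * γ * ⟪A (y + μ • t), A y⟫ := by
      rw [hz]
      have : (1 + (J : ℝ)) = γ ^ 2 - 1 := by rw [hγ2]; ring
      rw [this] at h3
      nlinarith [hT, h3]
    exact le_of_mul_le_mul_left h4 (by positivity)
  have hup : ⟪A (y + μ • t), A y⟫ ≤ ‖A (y + μ • t)‖ * (Real.sqrt (1 + δ) * ‖y‖) :=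
    (real_inner_le_norm _ _).trans (mul_le_mul_of_nonneg_left (hAS y hy) (norm_nonneg _))
  have hyb : (1 - δ * γ) * ‖y‖ ≤ Real.sqrt (1 + δ) * ‖A (y + μ • t)‖ := by
    by_cases hy0 : ‖y‖ = 0
    · rw [hy0]; simp; positivity
    · have : 0 < ‖y‖ := lt_of_le_of_ne (norm_nonneg _) (Ne.symm hy0)
      refine le_of_mul_le_mul_right ?_ this
      nlinarith
  have hzb : ‖y + μ • t‖ ≤ C * ‖A (y + μ • t)‖ := by
    have a1 : ‖y + μ • t‖ ≤ (1 + Real.sqrt (1 + J)) * ‖y‖ := by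
      calc ‖y + μ • t‖ ≤ ‖y‖ + ‖μ • t‖ := norm_add_le _ _
        _ = ‖y‖ + μ * ‖t‖ := by rw [norm_smul, Real.norm_of_nonneg hμ]
        _ ≤ ‖y‖ + μ * R := by gcongr
        _ ≤ _ := by linarith
    have a2 : ‖y‖ ≤ Real.sqrt (1 + δ) * ‖A (y + μ • t)‖ / (1 - δ * γ) := by
      rw [le_div_iff₀ hden]; linarith
    calc _ ≤ _ := a1
      _ ≤ (1 + Real.sqrt (1 + J)) * (Real.sqrt (1 + δ) * ‖A (y + μ • t)‖ / (1 - δ * γ)) := by gcongr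
      _ = _ := by rw [hC]; ring
  have hμ' : 0 ≤ 1 - μ := by linarith
  have hv : ‖(1 - μ) • t‖ ≤ 2 * Real.sqrt 2 * η := by
    rw [norm_smul, Real.norm_of_nonneg hμ']
    exact (mul_le_mul_of_nonneg_left htR hμ').trans h2
  have hAv : ‖A ((1 - μ) • t)‖ ≤ Real.sqrt (1 + δ) * (2 * Real.sqrt 2 * η) := by
    rw [map_smul, norm_smul, Real.norm_of_nonneg hμ']
    calc (1 - μ) * ‖A t‖ ≤ (1 - μ) * (Real.sqrt (1 + δ) * R) := by gcongr
      _ = Real.sqrt (1 + δ) * ((1 - μ) * R) := by ring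
      _ ≤ _ := by gcongr
  have hdec : y + t = (y + μ • t) + (1 - μ) • t := by rw [sub_smul, one_smul]; abel
  have hdec' : y + μ • t = (y + t) - (1 - μ) • t := by rw [sub_smul, one_smul]; abel
  have hAz : ‖A (y + μ • t)‖ ≤ ‖A (y + t)‖ + Real.sqrt (1 + δ) * (2 * Real.sqrt 2 * η) := by
    rw [hdec', map_sub]
    exact (norm_sub_le _ _).trans (by linarith)
  calc ‖y + t‖ ≤ ‖y + μ • t‖ + ‖(1 - μ) • t‖ := by rw [hdec]; exact norm_add_le _ _
    _ ≤ C * (‖A (y + t)‖ + Real.sqrt (1 + δ) * (2 * Real.sqrt 2 * η)) + 2 * Real.sqrt 2 * η := by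
        refine add_le_add (hzb.trans ?_) hv
        gcongr
    _ = C * ‖A (y + t)‖ + D * η := by rw [hD]; ring

end aux

section aux2
variable {H F : Type*} [NormedAddCommGroup H] [InnerProductSpace ℝ H]
  [NormedAddCommGroup F] [InnerProductSpace ℝ F] {I : Type*}

theorem gp_basis (e : I → H) (he : Orthonormal ℝ e) (g : Finset I) (i : I) :
    gpL e g (e i) = if i ∈ g then e i else 0 := by
  rw [gpL_apply, groupProj]
  simp only [orthonormal_iff_ite.1 he, ite_smul, one_smul, zero_smul]
  simp

theorem span_rep (e : I → H) (he : Orthonormal ℝ e) {J : ℕ}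
    (G : Fin J → Finset (Finset I))
    (hd : ∀ j j', j ≠ j' → ∀ g ∈ G j, ∀ g' ∈ G j', Disjoint g g')
    (hdisj : ∀ j, ∀ g ∈ G j, ∀ g' ∈ G j, g ≠ g' → Disjoint g g') (x : H)
    (hx : x ∈ Submodule.span ℝ (e '' {i : I | ∃ j, ∃ g ∈ G j, i ∈ g})) :
    x = ∑ j, ∑ g ∈ G j, gpL e g x := by
  have key : (LinearMap.id : H →ₗ[ℝ] H) x = (∑ j, ∑ g ∈ G j, gpL e g : H →ₗ[ℝ] H) x := by
    refine LinearMap.eqOn_span ?_ hx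
    rintro _ ⟨i, ⟨j0, g0, hg0, hi⟩, rfl⟩
    simp only [LinearMap.id_apply, LinearMap.sum_apply, gp_basis e he]
    rw [Finset.sum_eq_single j0, Finset.sum_eq_single g0]
    · rw [if_pos hi]
    · intro g hg hne
      rw [if_neg]
      exact Finset.disjoint_right.1 (hdisj j0 g hg g0 hg0 hne) hi
    · intro h; exact absurd hg0 h
    · intro j _ hne
      refine Finset.sum_eq_zero fun g hg => ?_
      rw [if_neg]
      exact Finset.disjoint_right.1 (hd j j0 hne g hg g0 hg0) hi
    · intro h; exact absurd (Finset.mem_univ _) h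
  simpa [LinearMap.sum_apply] using key

theorem levels_span (e : I → H) {J : ℕ} (G : Fin J → Finset (Finset I)) (k : Fin J → ℕ) (x : H)
    (hx : x ∈ sparsityInLevels e G k) :
    x ∈ Submodule.span ℝ (e '' {i : I | ∃ j, ∃ g ∈ G j, i ∈ g}) := by
  obtain ⟨c, hc, rfl⟩ := hx
  refine Submodule.sum_mem _ fun j _ => ?_
  obtain ⟨T, hT, -, h⟩ := hc j
  rw [h, groupRestrict]
  refine Submodule.sum_mem _ fun g hg => ?_
  rw [groupProj]
  refine Submodule.sum_mem _ fun i hi => Submodule.smul_mem _ _ (Submodule.subset_span ?_)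
  exact ⟨i, ⟨j, g, hT hg, hi⟩, rfl⟩

theorem levels_smul (e : I → H) {J : ℕ} (G : Fin J → Finset (Finset I)) (k : Fin J → ℕ) :
    ∀ s ∈ sparsityInLevels e G k, ∀ c : ℝ, c • s ∈ sparsityInLevels e G k := by
  rintro _ ⟨c, hc, rfl⟩ a
  refine ⟨fun j => a • c j, fun j => ?_, Finset.smul_sum⟩
  obtain ⟨T, hT, hcard, h⟩ := hc j
  refine ⟨T, hT, hcard, ?_⟩
  show a • c j = groupRestrict e T (a • c j)
  conv_lhs => rw [h]
  rw [groupRestrict, groupRestrict, Finset.smul_sum]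
  refine Finset.sum_congr rfl fun g _ => ?_
  rw [← gpL_apply, ← gpL_apply, map_smul]

theorem real_aux (R τ Y n η : ℝ) (J : ℕ) (hY : 0 ≤ Y) (hn : 0 ≤ n)
    (hη : 0 ≤ η) (h1 : R ^ 2 ≤ τ ^ 2 + n ^ 2) (h2 : R ^ 2 ≤ τ ^ 2 + Y ^ 2)
    (h3 : Y ^ 2 ≤ J * n ^ 2) (h4 : τ ≤ Y + 2 * η) (hτ : 0 ≤ τ) :
    ∃ μ : ℝ, 0 ≤ μ ∧ μ ≤ 1 ∧ μ * R ≤ Real.sqrt (1 + J) * n ∧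
      (1 - μ) * R ≤ 2 * Real.sqrt 2 * η := by
  have hJ2 : Real.sqrt (1 + J) ^ 2 = 1 + J := Real.sq_sqrt (by positivity)
  rcases le_or_gt τ Y with h | h
  · refine ⟨1, zero_le_one, le_rfl, ?_, by simp; positivity⟩
    refine le_of_sq_le_sq ?_ (by positivity)
    rw [mul_pow, mul_pow, hJ2]
    nlinarith [pow_le_pow_left₀ hτ h 2]
  · have hτ0 : 0 < τ := by linarith
    have hμ0 : 0 ≤ Y / τ := by positivity
    have hμ1 : Y / τ ≤ 1 := (div_le_one hτ0).2 h.le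
    have hμτ : Y / τ * τ = Y := by field_simp
    refine ⟨Y / τ, hμ0, hμ1, ?_, ?_⟩
    · refine le_of_sq_le_sq ?_ (by positivity)
      rw [mul_pow, mul_pow, hJ2]
      calc (Y / τ) ^ 2 * R ^ 2 ≤ (Y / τ) ^ 2 * (τ ^ 2 + n ^ 2) := by gcongr
        _ = (Y / τ * τ) ^ 2 + (Y / τ) ^ 2 * n ^ 2 := by ring
        _ ≤ Y ^ 2 + 1 * n ^ 2 := by
            rw [hμτ]
            gcongr
            exact pow_le_one₀ hμ0 hμ1
        _ ≤ _ := by linarith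
    · have hRτ : R ≤ Real.sqrt 2 * τ := by
        refine le_of_sq_le_sq ?_ (by positivity)
        rw [mul_pow, Real.sq_sqrt (by norm_num)]
        nlinarith [pow_le_pow_left₀ hY h.le 2]
      calc (1 - Y / τ) * R ≤ (1 - Y / τ) * (Real.sqrt 2 * τ) := by
            apply mul_le_mul_of_nonneg_left hRτ; linarith
        _ = Real.sqrt 2 * (τ - Y / τ * τ) := by ring
        _ ≤ Real.sqrt 2 * (2 * η) := by rw [hμτ]; gcongr; linarith
        _ = _ := by ring

theorem cone (e : I → H) (he : Orthonormal ℝ e) {J : ℕ}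
    (G : Fin J → Finset (Finset I)) (k : Fin J → ℕ)
    (hd : ∀ j j', j ≠ j' → ∀ g ∈ G j, ∀ g' ∈ G j', Disjoint g g')
    (hdisj : ∀ j, ∀ g ∈ G j, ∀ g' ∈ G j, g ≠ g' → Disjoint g g')
    (w : Fin J → ℝ) (hw : ∀ j, 0 ≤ w j) (x xs x' : H) (hx' : x' ∈ sparsityInLevels e G k)
    (hf : ∑ j, w j * ∑ g ∈ G j, ‖gpL e g xs‖ ≤ ∑ j, w j * ∑ g ∈ G j, ‖gpL e g x‖) :
    ∃ T : Fin J → Finset (Finset I), (∀ j, T j ⊆ G j) ∧ (∀ j, (T j).card ≤ k j) ∧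
      ∑ j, w j * ∑ g ∈ G j, ‖gpL e g (xs - x)‖ ≤
        2 * ∑ j, w j * ∑ g ∈ T j, ‖gpL e g (xs - x)‖
          + 2 * ∑ j, w j * ∑ g ∈ G j, ‖gpL e g (x - x')‖ := by
  obtain ⟨c, hc, hxc⟩ := hx'
  choose T hT hTc hTe using hc
  refine ⟨T, hT, hTc, ?_⟩
  have hz : ∀ j, ∀ g ∈ G j, g ∉ T j → gpL e g x' = 0 := by
    intro j g hg hgT
    rw [hxc, map_sum]
    refine Finset.sum_eq_zero fun j' _ => ?_
    rw [hTe j', groupRestrict, map_sum]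
    refine Finset.sum_eq_zero fun g' hg' => ?_
    rw [← gpL_apply]
    apply gp_disj e he
    by_cases hj : j = j'
    · subst hj
      exact hdisj j g hg g' (hT j hg') (fun h => hgT (h ▸ hg'))
    · exact hd j j' hj g hg g' (hT j' hg')
  have hlev : ∀ j, ∑ g ∈ G j, ‖gpL e g (xs - x)‖ + ∑ g ∈ G j, ‖gpL e g x‖ ≤
      2 * ∑ g ∈ T j, ‖gpL e g (xs - x)‖ + 2 * ∑ g ∈ G j, ‖gpL e g (x - x')‖
        + ∑ g ∈ G j, ‖gpL e g xs‖ := by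
    intro j
    have h1 : ∑ g ∈ T j, ‖gpL e g (xs - x)‖
        = ∑ g ∈ G j, if g ∈ T j then ‖gpL e g (xs - x)‖ else 0 := by
      rw [Finset.sum_ite_mem, Finset.inter_eq_right.2 (hT j)]
    rw [h1, Finset.mul_sum, Finset.mul_sum, ← Finset.sum_add_distrib, ← Finset.sum_add_distrib,
      ← Finset.sum_add_distrib]
    refine Finset.sum_le_sum fun g hg => ?_
    split_ifs with hgT
    · have : ‖gpL e g x‖ ≤ ‖gpL e g xs‖ + ‖gpL e g (xs - x)‖ := by
        have : gpL e g x = gpL e g xs - gpL e g (xs - x) := by rw [← map_sub]; congr 1; abel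
        rw [this]; exact norm_sub_le _ _
      linarith [norm_nonneg (gpL e g (x - x'))]
    · have hx : gpL e g x = gpL e g (x - x') := by rw [map_sub, hz j g hg hgT, sub_zero]
      have : ‖gpL e g (xs - x)‖ ≤ ‖gpL e g xs‖ + ‖gpL e g x‖ := by
        rw [map_sub]; exact norm_sub_le _ _
      rw [hx] at this ⊢
      linarith
  have hsum := Finset.sum_le_sum (s := Finset.univ) fun j _ =>
    mul_le_mul_of_nonneg_left (hlev j) (hw j)
  simp only [mul_add, Finset.sum_add_distrib, mul_left_comm _ (2 : ℝ)] at hsum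
  rw [← Finset.mul_sum, ← Finset.mul_sum] at hsum
  linarith

set_option maxHeartbeats 1000000 in
theorem real_main (e : I → H) (he : Orthonormal ℝ e)
    (J : ℕ) (G : Fin J → Finset (Finset I)) (k : Fin J → ℕ) (hk : ∀ j, 0 < k j)
    (hd : ∀ j j', j ≠ j' → ∀ g ∈ G j, ∀ g' ∈ G j', Disjoint g g')
    (hdisj : ∀ j, ∀ g ∈ G j, ∀ g' ∈ G j, g ≠ g' → Disjoint g g')
    (A : H →L[ℝ] F) (δ : ℝ) (hδ : δ < 1 / Real.sqrt (2 + J))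
    (hRIP : SatisfiesRIP A (sparsityInLevels e G k) δ)
    (C D : ℝ)
    (hC : C = (1 + Real.sqrt (1 + J)) * Real.sqrt (1 + δ) / (1 - δ * Real.sqrt (2 + J)))
    (hD : D = 2 * Real.sqrt 2 * (1 + Real.sqrt (1 + δ) * C))
    (x xs x' : H) (hx' : x' ∈ sparsityInLevels e G k)
    (hxs : xs - x ∈ Submodule.span ℝ (e '' {i : I | ∃ j, ∃ g ∈ G j, i ∈ g}))
    (hf : ∑ j, (Real.sqrt (k j))⁻¹ * ∑ g ∈ G j, ‖gpL e g xs‖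
      ≤ ∑ j, (Real.sqrt (k j))⁻¹ * ∑ g ∈ G j, ‖gpL e g x‖) :
    ‖xs - x‖ ≤ C * ‖A (xs - x)‖
      + D * ∑ j, (Real.sqrt (k j))⁻¹ * ∑ g ∈ G j, ‖gpL e g (x - x')‖ := by
  obtain ⟨T', hT', hT'c, hcone⟩ := cone e he G k hd hdisj (fun j => (Real.sqrt (k j))⁻¹)
    (fun j => by positivity) x xs x' hx' hf
  have hrep := span_rep e he G hd hdisj _ hxs
  have hη : 0 ≤ ∑ j, (Real.sqrt (k j))⁻¹ * ∑ g ∈ G j, ‖gpL e g (x - x')‖ := by positivity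
  generalize (∑ j, (Real.sqrt (k j))⁻¹ * ∑ g ∈ G j, ‖gpL e g (x - x')‖) = η at *
  generalize xs - x = h at *
  choose T hT hTc hTmax m hm0 hmU hm1 hm2 using
    fun j => aux_top (G j) (fun g => ‖gpL e g h‖) (fun g => norm_nonneg _) (k j) (hk j)
  have hkp : ∀ j, (0 : ℝ) < k j := fun j => by exact_mod_cast hk j
  have hws : ∀ j (s : ℝ), ((Real.sqrt (k j))⁻¹ * s) ^ 2 = s ^ 2 / k j := by
    intro j s
    rw [mul_pow, inv_pow, Real.sq_sqrt (hkp j).le]; field_simp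
  have hsplit : h = (∑ j, ∑ g ∈ T j, gpL e g h) + ∑ j, ∑ g ∈ G j \ T j, gpL e g h := by
    rw [← Finset.sum_add_distrib]
    conv_lhs => rw [hrep]
    refine Finset.sum_congr rfl fun j _ => ?_
    rw [add_comm, Finset.sum_sdiff (hT j)]
  have ysp : ∀ j, ∑ g ∈ T j, gpL e g h ∈ kGroupSparse e (G j) (k j) := by
    intro j
    simpa using sparse_mem e he (G j) (k j) (hdisj j) (T j) (hT j) (hTc j) (fun _ => 1) h
  have hyS : (∑ j, ∑ g ∈ T j, gpL e g h) ∈ sparsityInLevels e G k := ⟨_, ysp, rfl⟩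
  have hyn : ‖∑ j, ∑ g ∈ T j, gpL e g h‖ ^ 2 = ∑ j, ∑ g ∈ T j, ‖gpL e g h‖ ^ 2 := by
    rw [norm_sum_sq_orth]
    · refine Finset.sum_congr rfl fun j _ => ?_
      rw [norm_sum_sq_orth]
      intro g hg g' hg' hne
      exact gp_orth e he _ _ (hdisj j g (hT j hg) g' (hT j hg') hne) _ _
    · intro j _ j' _ hne
      exact sparse_orth e he _ _ _ _ (hd j j' hne) _ _ (ysp j) (ysp j')
  have hty : ⟪∑ j, ∑ g ∈ G j \ T j, gpL e g h, ∑ j, ∑ g ∈ T j, gpL e g h⟫ = 0 := by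
    rw [sum_inner]
    refine Finset.sum_eq_zero fun j _ => ?_
    rw [inner_sum]
    refine Finset.sum_eq_zero fun j' _ => ?_
    rw [sum_inner]
    refine Finset.sum_eq_zero fun g hg => ?_
    rw [inner_sum]
    refine Finset.sum_eq_zero fun g' hg' => ?_
    rw [Finset.mem_sdiff] at hg
    apply gp_orth e he
    by_cases hj : j = j'
    · subst hj
      exact hdisj j g hg.1 g' (hT j hg') (fun h => hg.2 (h ▸ hg'))
    · exact hd j j' hj g hg.1 g' (hT j' hg')
  -- radii
  obtain ⟨a, had⟩ : ∃ a : Fin J → ℝ,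
      a = fun j => max (m j) ((∑ g ∈ G j \ T j, ‖gpL e g h‖) / k j) := ⟨_, rfl⟩
  have ham : ∀ j, m j ≤ a j := fun j => by rw [had]; exact le_max_left _ _
  have has : ∀ j, (∑ g ∈ G j \ T j, ‖gpL e g h‖) / k j ≤ a j :=
    fun j => by rw [had]; exact le_max_right _ _
  have ha0 : ∀ j, 0 ≤ a j := fun j => (hm0 j).trans (ham j)
  have hka : ∀ j, k j * a j ^ 2 ≤
      ((Real.sqrt (k j))⁻¹ * ∑ g ∈ G j \ T j, ‖gpL e g h‖) ^ 2 + k j * m j ^ 2 := by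
    intro j
    rw [hws]
    have hp := hkp j
    have e1 : (k j : ℝ) * ((∑ g ∈ G j \ T j, ‖gpL e g h‖) / k j) ^ 2
        = (∑ g ∈ G j \ T j, ‖gpL e g h‖) ^ 2 / k j := by field_simp
    have p1 : 0 ≤ (∑ g ∈ G j \ T j, ‖gpL e g h‖) ^ 2 / k j := by positivity
    have p2 : 0 ≤ k j * m j ^ 2 := by positivity
    rw [had]
    rcases max_choice (m j) ((∑ g ∈ G j \ T j, ‖gpL e g h‖) / k j) with hh | hh
    · simp only [hh]; linarith
    · simp only [hh]; linarith
  have hR0 : 0 ≤ ∑ j, (k j : ℝ) * a j ^ 2 := by positivity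
  have hthull := levels_hull e he G k hd (fun j => ∑ g ∈ G j \ T j, gpL e g h)
    (fun j => k j * a j ^ 2) (Real.sqrt (∑ j, k j * a j ^ 2)) (Real.sqrt_nonneg _)
    (fun j => level_hull e he (G j) (k j) (hdisj j) (G j \ T j) Finset.sdiff_subset h (a j) (ha0 j)
      (fun g hg => (hmU j g (Finset.mem_sdiff.1 hg).1 (Finset.mem_sdiff.1 hg).2).trans (ham j))
      (by have := (div_le_iff₀ (hkp j)).1 (has j); linarith))
    (by rw [Real.sq_sqrt hR0])
  have hτs : ∑ j, ((Real.sqrt (k j))⁻¹ * ∑ g ∈ G j \ T j, ‖gpL e g h‖) ^ 2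
      ≤ (∑ j, (Real.sqrt (k j))⁻¹ * ∑ g ∈ G j \ T j, ‖gpL e g h‖) ^ 2 :=
    sum_sq_aux _ _ fun j _ => by positivity
  have hYs : ∑ j, ((Real.sqrt (k j))⁻¹ * ∑ g ∈ T j, ‖gpL e g h‖) ^ 2
      ≤ (∑ j, (Real.sqrt (k j))⁻¹ * ∑ g ∈ T j, ‖gpL e g h‖) ^ 2 :=
    sum_sq_aux _ _ fun j _ => by positivity
  have hsumka := Finset.sum_le_sum (s := Finset.univ) fun j _ => hka j
  rw [Finset.sum_add_distrib] at hsumka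
  obtain ⟨μ, hμ0, hμ1, hμa, hμb⟩ := real_aux (Real.sqrt (∑ j, k j * a j ^ 2))
    (∑ j, (Real.sqrt (k j))⁻¹ * ∑ g ∈ G j \ T j, ‖gpL e g h‖)
    (∑ j, (Real.sqrt (k j))⁻¹ * ∑ g ∈ T j, ‖gpL e g h‖)
    ‖∑ j, ∑ g ∈ T j, gpL e g h‖ η J (by positivity) (norm_nonneg _) hη
    (by
      rw [Real.sq_sqrt hR0, hyn]
      have := Finset.sum_le_sum (s := Finset.univ) fun j _ => hm2 j
      linarith)
    (by
      rw [Real.sq_sqrt hR0]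
      have : ∑ j, k j * m j ^ 2 ≤ ∑ j, ((Real.sqrt (k j))⁻¹ * ∑ g ∈ T j, ‖gpL e g h‖) ^ 2 := by
        refine Finset.sum_le_sum fun j _ => ?_
        rw [hws, le_div_iff₀ (hkp j)]
        have h0 : 0 ≤ k j * m j := mul_nonneg (hkp j).le (hm0 j)
        have := pow_le_pow_left₀ h0 (hm1 j) 2
        linarith
      linarith)
    (by
      rw [hyn]
      have c1 := sq_sum_le_card_mul_sum_sq (s := (Finset.univ : Finset (Fin J)))
        (f := fun j => (Real.sqrt (k j))⁻¹ * ∑ g ∈ T j, ‖gpL e g h‖)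
      rw [Finset.card_univ, Fintype.card_fin] at c1
      refine c1.trans (mul_le_mul_of_nonneg_left (Finset.sum_le_sum fun j _ => ?_) (by positivity))
      rw [hws, div_le_iff₀ (hkp j)]
      have c2 := sq_sum_le_card_mul_sum_sq (s := T j) (f := fun g => ‖gpL e g h‖)
      have c3 : ((T j).card : ℝ) ≤ k j := by exact_mod_cast hTc j
      have c4 : 0 ≤ ∑ g ∈ T j, ‖gpL e g h‖ ^ 2 := by positivity
      nlinarith)
    (by
      have d1 : ∑ j, (Real.sqrt (k j))⁻¹ * ∑ g ∈ T' j, ‖gpL e g h‖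
          ≤ ∑ j, (Real.sqrt (k j))⁻¹ * ∑ g ∈ T j, ‖gpL e g h‖ :=
        Finset.sum_le_sum fun j _ => mul_le_mul_of_nonneg_left (hTmax j _ (hT' j) (hT'c j)) (by positivity)
      have d2 : ∑ j, (Real.sqrt (k j))⁻¹ * ∑ g ∈ G j, ‖gpL e g h‖
          = ∑ j, (Real.sqrt (k j))⁻¹ * ∑ g ∈ G j \ T j, ‖gpL e g h‖
            + ∑ j, (Real.sqrt (k j))⁻¹ * ∑ g ∈ T j, ‖gpL e g h‖ := by
        rw [← Finset.sum_add_distrib]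
        refine Finset.sum_congr rfl fun j _ => ?_
        rw [← mul_add, Finset.sum_sdiff (hT j)]
      linarith)
    (by positivity)
  have := core A _ (levels_smul e G k) δ J hδ hRIP C D hC hD _ _ hyS _ hthull hty μ η hμ0 hμ1 hμa hμb hη
  rwa [← hsplit] at this

end aux2
/-- stable and robust recovery for structured sparsity in `J ≥ 2` levels by
minimizing the weighted group norm in levels with adapted weights `w_j = 1/√k_j`, under
the RIP with `δ < 1/√(2+J)`. -/
theorem stmt4 {H F : Type*} [NormedAddCommGroup H] [InnerProductSpace ℝ H] [CompleteSpace H]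
    [NormedAddCommGroup F] [InnerProductSpace ℝ F] [CompleteSpace F]
    {I : Type*} (e : I → H) (he : Orthonormal ℝ e)
    (J : ℕ) (hJ : 2 ≤ J) (lvl : I → Fin J)
    (G : Fin J → Finset (Finset I)) (k : Fin J → ℕ) (hk : ∀ j, 0 < k j)
    (hlvl : ∀ j, ∀ g ∈ G j, ∀ i ∈ g, lvl i = j)
    (hdisj : ∀ j, ∀ g ∈ G j, ∀ g' ∈ G j, g ≠ g' → Disjoint g g')
    (A : H →L[ℝ] F) (δ : ℝ) (hδ : δ < 1 / Real.sqrt (2 + J))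
    (hRIP : SatisfiesRIP A (sparsityInLevels e G k) δ)
    (C D : ℝ)
    (hC : C = (1 + Real.sqrt (1 + J)) * Real.sqrt (1 + δ) / (1 - δ * Real.sqrt (2 + J)))
    (hD : D = 2 * Real.sqrt 2 * (1 + Real.sqrt (1 + δ) * C)) :
    ∀ ε : ℝ, 0 ≤ ε → ∀ x : H, ∀ err : F, ‖err‖ ≤ ε → ∀ xs : H,
      (‖A xs - (A x + err)‖ ≤ ε ∧
        ∀ z : H, ‖A z - (A x + err)‖ ≤ ε →
          fwLevels e G (fun j => (Real.sqrt (k j))⁻¹) xs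
            ≤ fwLevels e G (fun j => (Real.sqrt (k j))⁻¹) z) →
      ENNReal.ofReal ‖xs - x‖
        ≤ ENNReal.ofReal (C * (‖err‖ + ε)) +
          ENNReal.ofReal D *
            distF (fwLevels e G (fun j => (Real.sqrt (k j))⁻¹)) (sparsityInLevels e G k) x := by
  intro ε hε x err herr xs ⟨hfeas, hmin⟩
  have hd : ∀ j j', j ≠ j' → ∀ g ∈ G j, ∀ g' ∈ G j', Disjoint g g' := by
    intro j j' hne g hg g' hg'
    rw [Finset.disjoint_left]
    intro i hi hi'
    exact hne ((hlvl j g hg i hi).symm.trans (hlvl j' g' hg' i hi'))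
  have hγ : 0 < Real.sqrt (2 + J) := by positivity
  have hden : 0 < 1 - δ * Real.sqrt (2 + J) := by
    have := (lt_div_iff₀ hγ).1 hδ
    linarith
  have hC0 : 0 ≤ C := by rw [hC]; positivity
  have hD0 : 0 < D := by rw [hD]; positivity
  have hD1 : ENNReal.ofReal D ≠ 0 := by simpa using hD0
  have hAh : ‖A (xs - x)‖ ≤ ‖err‖ + ε := by
    have : A (xs - x) = (A xs - (A x + err)) + err := by rw [map_sub]; abel
    rw [this]
    exact (norm_add_le _ _).trans (by linarith)
  have hmx := hmin x (by simpa using herr)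
  rw [distF, ENNReal.mul_iInf_of_ne hD1 ENNReal.ofReal_ne_top, ENNReal.add_iInf]
  refine le_iInf fun x' => ?_
  rw [ENNReal.mul_iInf_of_ne hD1 ENNReal.ofReal_ne_top, ENNReal.add_iInf]
  refine le_iInf fun hx' => ?_
  have hx'V := levels_span e G k x' hx'
  by_cases hxV : x ∈ Submodule.span ℝ (e '' {i : I | ∃ j, ∃ g ∈ G j, i ∈ g})
  · have hxsV : xs ∈ Submodule.span ℝ (e '' {i : I | ∃ j, ∃ g ∈ G j, i ∈ g}) := by
      by_contra hn
      rw [fwLevels, fwLevels, if_neg hn, if_pos hxV] at hmx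
      exact absurd hmx (by simp)
    rw [fwLevels, fwLevels, if_pos hxsV, if_pos hxV,
      ENNReal.ofReal_le_ofReal_iff (by positivity)] at hmx
    have hmain := real_main e he J G k hk hd hdisj A δ hδ hRIP C D hC hD x xs x' hx'
      (Submodule.sub_mem _ hxsV hxV) hmx
    have hsym : ∑ j, (Real.sqrt (k j))⁻¹ * ∑ g ∈ G j, ‖groupProj e g (x' - x)‖
        = ∑ j, (Real.sqrt (k j))⁻¹ * ∑ g ∈ G j, ‖groupProj e g (x - x')‖ := by
      refine Finset.sum_congr rfl fun j _ => ?_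
      congr 1
      refine Finset.sum_congr rfl fun g _ => ?_
      rw [← gpL_apply, ← gpL_apply, ← norm_neg, ← map_neg, neg_sub]
    have hη : 0 ≤ ∑ j, (Real.sqrt (k j))⁻¹ * ∑ g ∈ G j, ‖groupProj e g (x - x')‖ := by positivity
    rw [fwLevels, fwLevels, if_pos (Submodule.sub_mem _ hxV hx'V),
      if_pos (Submodule.sub_mem _ hx'V hxV), hsym, ENNReal.add_div, ENNReal.add_halves,
      ← ENNReal.ofReal_mul hD0.le, ← ENNReal.ofReal_add (by positivity) (by positivity)]
    apply ENNReal.ofReal_le_ofReal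
    refine hmain.trans ?_
    simp only [gpL_apply]
    gcongr
  · have hn : x - x' ∉ Submodule.span ℝ (e '' {i : I | ∃ j, ∃ g ∈ G j, i ∈ g}) := by
      intro hh
      apply hxV
      have := Submodule.add_mem _ hh hx'V
      simpa using this
    rw [fwLevels, if_neg hn]
    simp [ENNReal.top_div, ENNReal.mul_top hD1]
end
end

section
/- Let Σ_k be a k-group-sparse model in a Hilbert space H with a finite group collection G whose groups all have size at most d. Then the normalized secant set S(Σ_k) has upper box-counting dimension at most 2kd, i.e. boxdim(S(Σ_k)) ≤ 2kd; in particular it is finite. -/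
noncomputable section
open scoped ENNReal NNReal Pointwise RealInnerProductSpace
open Filter Set Classical MeasureTheory ProbabilityTheory

/-- The covering number `N(S, α)`: the minimal number of closed balls of radius `α` with
centers in `S` needed to cover `S` (`+∞` if there is no finite cover). -/
def coveringNumber {H : Type*} [NormedAddCommGroup H] (S : Set H) (α : ℝ) : ℕ∞ :=
  sInf {n : ℕ∞ | ∃ C : Set H, C ⊆ S ∧ C.Finite ∧ (C.ncard : ℕ∞) ≤ n ∧
    ∀ y ∈ S, ∃ c ∈ C, ‖y - c‖ ≤ α}

/-- `log N(S, α)`, as an extended real. -/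
def logCover {H : Type*} [NormedAddCommGroup H] (S : Set H) (α : ℝ) : EReal :=
  if h : coveringNumber S α = ⊤ then ⊤
  else ((Real.log ((coveringNumber S α).untop h) : ℝ) : EReal)

/-- The upper box-counting dimension `limsup_{α → 0⁺} log N(S,α) / log (1/α)`. -/
def boxDim {H : Type*} [NormedAddCommGroup H] (S : Set H) : EReal :=
  Filter.limsup (fun α : ℝ => logCover S α * (((Real.log (1 / α))⁻¹ : ℝ) : EReal))
    (nhdsWithin (0 : ℝ) (Set.Ioi 0))

lemma coeff_sum {H : Type*} [NormedAddCommGroup H] [InnerProductSpace ℝ H] [CompleteSpace H]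
    {I : Type*} (B : HilbertBasis I ℝ H) (U : Finset I) (z : H)
    (hz : ∀ i ∉ U, ⟪z, B i⟫ = 0) : z = ∑ i ∈ U, ⟪z, B i⟫ • B i := by
  have h1 := B.hasSum_repr z
  have h2 : HasSum (fun i => B.repr z i • B i) (∑ i ∈ U, B.repr z i • B i) := by
    apply hasSum_sum_of_ne_finset_zero
    intro i hi
    rw [B.repr_apply_apply, real_inner_comm, hz i hi, zero_smul]
  have h3 := h1.unique h2
  refine h3.trans (Finset.sum_congr rfl fun i _ => ?_)
  rw [B.repr_apply_apply, real_inner_comm]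

lemma cover_bound {H : Type*} [NormedAddCommGroup H] [InnerProductSpace ℝ H] [CompleteSpace H]
    {I : Type*} (B : HilbertBasis I ℝ H) (P : Finset (Finset I)) (n : ℕ)
    (hP : ∀ U ∈ P, U.card ≤ n) (S : Set H) (hn : ∀ y ∈ S, ‖y‖ ≤ 1)
    (hS : ∀ y ∈ S, ∃ U ∈ P, ∀ i ∉ U, ⟪y, B i⟫ = 0) (α : ℝ) (m : ℕ) (hm0 : 0 < m)
    (hm : (n : ℝ) / m ≤ α) :
    coveringNumber S α ≤ ((P.card * (2 * m + 1) ^ n : ℕ) : ℕ∞) := by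
  have hm0' : (0 : ℝ) < m := by exact_mod_cast hm0
  let F : Finset (Σ U : Finset I, ∀ i ∈ U, ℤ) :=
    P.sigma (fun U => U.pi (fun _ => Finset.Icc (-(m : ℤ)) m))
  have hF : F.card ≤ P.card * (2 * m + 1) ^ n := by
    simp only [F, Finset.card_sigma, Finset.card_pi, Finset.prod_const, Int.card_Icc]
    have e : ((m : ℤ) + 1 - -(m : ℤ)).toNat = 2 * m + 1 := by omega
    rw [e]
    calc _ ≤ ∑ U ∈ P, (2 * m + 1) ^ n :=
          Finset.sum_le_sum fun U hU => Nat.pow_le_pow_right (by omega) (hP U hU)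
      _ = _ := by simp
  choose! V hVP hV using hS
  let φ : H → (Σ U : Finset I, ∀ i ∈ U, ℤ) := fun y => ⟨V y, fun i _ => ⌊⟪y, B i⟫ * m⌋⟩
  have hφ : ∀ y ∈ S, φ y ∈ F := by
    intro y hy
    simp only [φ, F, Finset.mem_sigma, Finset.mem_pi, Finset.mem_Icc]
    refine ⟨hVP y hy, fun i _ => ?_⟩
    have h1 : |⟪y, B i⟫| ≤ 1 := by
      refine (abs_real_inner_le_norm _ _).trans ?_
      rw [B.orthonormal.1 i, mul_one]; exact hn y hy
    have h2 := abs_le.1 h1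
    constructor
    · rw [Int.le_floor]; push_cast; nlinarith
    · have : (⌊⟪y, B i⟫ * m⌋ : ℝ) ≤ m := (Int.floor_le _).trans (by nlinarith)
      exact_mod_cast this
  have hfin : (φ '' S).Finite := F.finite_toSet.subset (by rintro _ ⟨y, hy, rfl⟩; exact hφ y hy)
  have hr : ∀ p ∈ φ '' S, ∃ y ∈ S, φ y = p := fun p hp => hp
  choose! r hrS hrφ using hr
  apply sInf_le
  refine ⟨r '' (φ '' S), ?_, hfin.image r, ?_, ?_⟩
  · rintro _ ⟨p, hp, rfl⟩; exact hrS p hp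
  · have h1 := Set.ncard_image_le (f := r) hfin
    have h2 : (φ '' S).ncard ≤ F.card := by
      rw [← Set.ncard_coe_finset]
      exact Set.ncard_le_ncard (by rintro _ ⟨y, hy, rfl⟩; exact hφ y hy) F.finite_toSet
    exact_mod_cast (h1.trans h2).trans hF
  · intro y hy
    have hp : φ y ∈ φ '' S := ⟨y, hy, rfl⟩
    refine ⟨r (φ y), ⟨_, hp, rfl⟩, ?_⟩
    have hc := hrS _ hp
    have he := hrφ _ hp
    generalize r (φ y) = c at hc he
    simp only [φ, Sigma.mk.injEq] at he
    obtain ⟨hVe, he⟩ := he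
    have key : ∀ i ∈ V y, ⌊⟪c, B i⟫ * m⌋ = ⌊⟪y, B i⟫ * m⌋ := by
      intro i hi
      have hVc := hV c hc
      have : ∀ (U W : Finset I) (f g : I → ℤ), U = W →
          HEq (fun i (_ : i ∈ U) => f i) (fun i (_ : i ∈ W) => g i) → ∀ i ∈ W, f i = g i := by
        rintro U W f g rfl h i hi
        exact congrFun (congrFun (eq_of_heq h) i) hi
      exact this _ _ _ _ hVe he i hi
    have hz := coeff_sum B (V y) (y - c) (by
      intro i hi
      rw [inner_sub_left, hV y hy i hi, hV c hc i (hVe ▸ hi), sub_zero])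
    rw [hz]
    refine (norm_sum_le _ _).trans ?_
    have : ∀ i ∈ V y, ‖⟪y - c, B i⟫ • B i‖ ≤ 1 / m := by
      intro i hi
      rw [norm_smul, B.orthonormal.1 i, mul_one, inner_sub_left, Real.norm_eq_abs,
        le_div_iff₀ hm0', ← abs_of_pos hm0', ← abs_mul, sub_mul]
      exact (Int.abs_sub_lt_one_of_floor_eq_floor (key i hi).symm).le
    refine (Finset.sum_le_sum this).trans ?_
    rw [Finset.sum_const, nsmul_eq_mul, mul_one_div]
    refine le_trans ?_ hm
    gcongr
    exact hP _ (hVP y hy)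

lemma boxDim_le_of_cover {H : Type*} [NormedAddCommGroup H] (S : Set H) (p n : ℕ)
    (h : ∀ α : ℝ, 0 < α → ∀ m : ℕ, 0 < m → (n : ℝ) / m ≤ α →
      coveringNumber S α ≤ ((p * (2 * m + 1) ^ n : ℕ) : ℕ∞)) :
    boxDim S ≤ ((n : ℝ) : EReal) := by
  set A : ℝ := (p + 1) * (2 * n + 5) ^ n with hA
  have hA1 : 1 ≤ A := by
    have : (1 : ℝ) ≤ (2 * n + 5) ^ n := one_le_pow₀ (by linarith [n.cast_nonneg (α := ℝ)])
    nlinarith [p.cast_nonneg (α := ℝ)]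
  have hlog : Tendsto (fun α : ℝ => Real.log (1 / α)) (nhdsWithin 0 (Ioi 0)) atTop := by
    simp only [one_div]
    exact Real.tendsto_log_atTop.comp tendsto_inv_nhdsGT_zero
  have ht : Tendsto (fun α : ℝ => ((Real.log A * (Real.log (1 / α))⁻¹ + n : ℝ) : EReal))
      (nhdsWithin 0 (Ioi 0)) (nhds ((n : ℝ) : EReal)) := by
    refine (continuous_coe_real_ereal.tendsto _).comp ?_
    simpa using ((tendsto_inv_atTop_zero.comp hlog).const_mul (Real.log A)).add_const (n : ℝ)
  rw [← ht.limsup_eq]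
  refine limsup_le_limsup ?_
  filter_upwards [Ioo_mem_nhdsGT (zero_lt_one (α := ℝ))] with α hα
  obtain ⟨h0, h1⟩ := hα
  set m := ⌈(n : ℝ) / α⌉₊ + 1 with hm
  have hmr : (m : ℝ) = (⌈(n : ℝ) / α⌉₊ : ℝ) + 1 := by rw [hm]; push_cast; rfl
  have hmpos : (0 : ℝ) < m := by rw [hmr]; positivity
  have hb := h α h0 m (by omega) (by
    rw [div_le_iff₀ hmpos, mul_comm, ← div_le_iff₀ h0, hmr]
    linarith [Nat.le_ceil ((n : ℝ) / α)])
  have hne : coveringNumber S α ≠ ⊤ := ne_top_of_le_ne_top (ENat.natCast_ne_top _) hb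
  obtain ⟨N, hN⟩ := ENat.ne_top_iff_exists.1 hne
  have hlc : logCover S α = ((Real.log N : ℝ) : EReal) := by
    unfold logCover
    rw [dif_neg hne]
    congr 3
    have : (((coveringNumber S α).untop hne : ℕ) : ℕ∞) = (N : ℕ∞) := by
      rw [hN]; exact WithTop.coe_untop _ _
    exact_mod_cast this
  rw [hlc, ← EReal.coe_mul, EReal.coe_le_coe_iff]
  have hN' : N ≤ p * (2 * m + 1) ^ n := by rw [← hN] at hb; exact_mod_cast hb
  have hNr : (N : ℝ) ≤ p * (2 * m + 1) ^ n := by exact_mod_cast hN'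
  have hL : 0 < Real.log (1 / α) := Real.log_pos (by rw [lt_div_iff₀ h0]; linarith)
  have hinv : 1 ≤ 1 / α := by rw [le_div_iff₀ h0]; linarith
  have hmb : (2 * m + 1 : ℝ) ≤ (2 * n + 5) * (1 / α) := by
    have := Nat.ceil_lt_add_one (a := (n : ℝ) / α) (by positivity)
    rw [hmr]
    have e : (2 * n + 5) * (1 / α) = 2 * (n / α) + 5 * (1 / α) := by ring
    rw [e]; linarith
  have hNA : (N : ℝ) ≤ A * (1 / α) ^ n := by
    calc (N : ℝ) ≤ p * (2 * m + 1) ^ n := hNr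
      _ ≤ (p + 1) * ((2 * n + 5) * (1 / α)) ^ n := by gcongr; linarith
      _ = _ := by rw [mul_pow, hA]; ring
  have hlogN : Real.log N ≤ Real.log A + n * Real.log (1 / α) := by
    rcases Nat.eq_zero_or_pos N with rfl | hpos
    · simp only [Nat.cast_zero, Real.log_zero]
      have := Real.log_nonneg hA1
      positivity
    · have := Real.log_le_log (by exact_mod_cast hpos) hNA
      rwa [Real.log_mul (by positivity) (by positivity), Real.log_pow] at this
  calc Real.log N * (Real.log (1 / α))⁻¹
      ≤ (Real.log A + n * Real.log (1 / α)) * (Real.log (1 / α))⁻¹ := by gcongr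
    _ = _ := by field_simp

lemma kGroupSparse_coeff {H : Type*} [NormedAddCommGroup H] [InnerProductSpace ℝ H]
    [CompleteSpace H] {I : Type*} (B : HilbertBasis I ℝ H) (T : Finset (Finset I)) (x : H)
    (hx : x = groupRestrict (fun i => B i) T x) (i : I) (hi : i ∉ T.biUnion id) :
    ⟪x, B i⟫ = 0 := by
  rw [hx]
  unfold groupRestrict groupProj
  rw [sum_inner]
  refine Finset.sum_eq_zero fun g hg => ?_
  rw [sum_inner]
  refine Finset.sum_eq_zero fun j hj => ?_
  have hji : j ≠ i := by
    rintro rfl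
    exact hi (Finset.mem_biUnion.2 ⟨g, hg, hj⟩)
  rw [real_inner_smul_left, B.orthonormal.2 hji, mul_zero]

/-- the normalized secant set of a `k`-group-sparse model with groups of size
at most `d` has upper box-counting dimension at most `2kd`; in particular it is finite. -/
theorem stmt6 {H : Type*} [NormedAddCommGroup H] [InnerProductSpace ℝ H] [CompleteSpace H]
    {I : Type*} (B : HilbertBasis I ℝ H) (G : Finset (Finset I))
    (hdisj : ∀ g ∈ G, ∀ g' ∈ G, g ≠ g' → Disjoint g g')
    (d : ℕ) (hd : ∀ g ∈ G, g.card ≤ d) (k : ℕ) :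
    boxDim (normSecant (kGroupSparse (fun i => B i) G k)) ≤ (((2 * k * d : ℕ) : ℝ) : EReal) ∧
    boxDim (normSecant (kGroupSparse (fun i => B i) G k)) < ⊤ := by
  have main : boxDim (normSecant (kGroupSparse (fun i => B i) G k)) ≤
      (((2 * k * d : ℕ) : ℝ) : EReal) := by
    let Q := G.powerset.filter (fun T => T.card ≤ k)
    let P : Finset (Finset I) := (Q ×ˢ Q).image (fun q => q.1.biUnion id ∪ q.2.biUnion id)
    apply boxDim_le_of_cover _ P.card
    intro α _ m hm0 hm
    refine cover_bound B P _ ?_ _ ?_ ?_ α m hm0 hm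
    · intro U hU
      simp only [P, Q, Finset.mem_image, Finset.mem_product, Finset.mem_filter,
        Finset.mem_powerset] at hU
      obtain ⟨⟨T, T'⟩, ⟨⟨hT, hTk⟩, hT', hTk'⟩, rfl⟩ := hU
      have aux : ∀ T : Finset (Finset I), T ⊆ G → T.card ≤ k → (T.biUnion id).card ≤ k * d :=
        fun T hT hk => (Finset.card_biUnion_le_card_mul _ _ d fun g hg => hd g (hT hg)).trans
          (Nat.mul_le_mul_right d hk)
      have a1 := aux T hT hTk
      have a2 := aux T' hT' hTk'
      have a3 := Finset.card_union_le (T.biUnion id) (T'.biUnion id)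
      have : 2 * k * d = k * d + k * d := by ring
      simp only at *
      omega
    · rintro _ ⟨y, _, hy, rfl⟩
      rw [norm_smul, norm_inv, norm_norm, inv_mul_cancel₀ (norm_ne_zero_iff.2 hy)]
    · rintro _ ⟨_, ⟨x, ⟨T, hT, hTk, hx⟩, x', ⟨T', hT', hTk', hx'⟩, rfl⟩, hy, rfl⟩
      refine ⟨T.biUnion id ∪ T'.biUnion id, ?_, ?_⟩
      · exact Finset.mem_image.2 ⟨(T, T'), by simp [Q, *], rfl⟩
      · intro i hi
        rw [Finset.mem_union, not_or] at hi
        rw [real_inner_smul_left, inner_sub_left, kGroupSparse_coeff B T x hx i hi.1,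
          kGroupSparse_coeff B T' x' hx' i hi.2, sub_zero, mul_zero]
  exact ⟨main, main.trans_lt (EReal.coe_lt_top _)⟩
end
end

section
/- Let Σ be a structured-sparsity-in-levels model in a Hilbert space H with J levels, where level j carries a k_j-group-sparse model with a finite group collection G_j whose groups have size at most d_j. Then the normalized secant set S(Σ) has upper box-counting dimension at most 2·Σ_{j=1}^J k_j·d_j; in particular it is finite. -/
noncomputable section
open scoped ENNReal NNReal Pointwise RealInnerProductSpace
open Filter Set Classical MeasureTheory ProbabilityTheory

lemma cover_le_of_code {H : Type*} [NormedAddCommGroup H] {β : Type*} (S : Set H) (α : ℝ)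
    (f : H → β) (F : Finset β) (hf : ∀ y ∈ S, f y ∈ F)
    (hc : ∀ x ∈ S, ∀ y ∈ S, f x = f y → ‖x - y‖ ≤ α) :
    coveringNumber S α ≤ (F.card : ℕ∞) := by
  have hex : ∀ b : β, ∃ c : H, b ∈ f '' S → c ∈ S ∧ f c = b := by
    intro b
    by_cases hb : b ∈ f '' S
    · obtain ⟨c, hc1, hc2⟩ := hb
      exact ⟨c, fun _ => ⟨hc1, hc2⟩⟩
    · exact ⟨0, fun h => absurd h hb⟩
  choose r hr using hex
  have hsub : f '' S ⊆ (F : Set β) := by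
    rintro _ ⟨y, hy, rfl⟩
    exact hf y hy
  have hfin : (f '' S).Finite := F.finite_toSet.subset hsub
  apply sInf_le
  refine ⟨r '' (f '' S), ?_, hfin.image r, ?_, ?_⟩
  · rintro _ ⟨b, hb, rfl⟩
    exact (hr b hb).1
  · have h1 : (r '' (f '' S)).ncard ≤ (f '' S).ncard := Set.ncard_image_le hfin
    have h2 : (f '' S).ncard ≤ (F : Set β).ncard := Set.ncard_le_ncard hsub F.finite_toSet
    rw [Set.ncard_coe_finset] at h2
    exact_mod_cast h1.trans h2
  · intro y hy
    have hb : f y ∈ f '' S := ⟨y, hy, rfl⟩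
    exact ⟨r (f y), ⟨f y, hb, rfl⟩, hc _ hy _ (hr _ hb).1 (hr _ hb).2.symm⟩

lemma span_repr {H : Type*} [NormedAddCommGroup H] [InnerProductSpace ℝ H]
    {I : Type*} (e : I → H) (he : Orthonormal ℝ e) (A : Finset I) (y : H)
    (hy : y ∈ Submodule.span ℝ (e '' (A : Set I))) :
    y = ∑ i ∈ A, ⟪y, e i⟫ • e i := by
  rw [Submodule.mem_span_image_finset_iff_exists_fun] at hy
  obtain ⟨c0, hc0⟩ := hy
  let c : I → ℝ := fun i => if h : i ∈ A then c0 ⟨i, h⟩ else 0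
  have hc : ∑ i ∈ A, c i • e i = y := by
    rw [← hc0, ← Finset.sum_coe_sort]
    exact Finset.sum_congr rfl fun i _ => by simp [c]
  have h : ∀ i ∈ A, ⟪y, e i⟫ = c i := by
    intro i hi
    rw [← hc]
    simpa using he.inner_left_sum c hi
  rw [Finset.sum_congr rfl (fun i hi => by rw [h i hi])]
  exact hc.symm

lemma cover_bound_s7 {H : Type*} [NormedAddCommGroup H] [InnerProductSpace ℝ H]
    {I : Type*} (e : I → H) (he : Orthonormal ℝ e) (S : Set H) (𝒜 : Finset (Finset I)) (D : ℕ)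
    (hA : ∀ A ∈ 𝒜, A.card ≤ D)
    (hS : ∀ y ∈ S, ‖y‖ ≤ 1 ∧ ∃ A ∈ 𝒜, y ∈ Submodule.span ℝ (e '' (A : Set I)))
    (α : ℝ) (m : ℕ) (hm : 0 < m) (hmα : (D : ℝ) ≤ α * m) :
    coveringNumber S α ≤ ((𝒜.card * (2 * m + 1) ^ D : ℕ) : ℕ∞) := by
  have hex : ∀ y : H, ∃ A : Finset I, y ∈ S → A ∈ 𝒜 ∧ y ∈ Submodule.span ℝ (e '' (A : Set I)) := by
    intro y
    by_cases hy : y ∈ S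
    · obtain ⟨A, h1, h2⟩ := (hS y hy).2
      exact ⟨A, fun _ => ⟨h1, h2⟩⟩
    · exact ⟨∅, fun h => absurd h hy⟩
  choose s hs using hex
  have hm' : (0 : ℝ) < m := by exact_mod_cast hm
  let E : (A : Finset I) → ((i : I) → i ∈ A → ℤ) → Finset I × (I → ℤ) :=
    fun A p => (A, fun i => if h : i ∈ A then p i h else 0)
  let F : Finset (Finset I × (I → ℤ)) :=
    𝒜.biUnion (fun A => (A.pi (fun _ => Finset.Icc (-(m : ℤ)) m)).image (E A))
  have hF : F.card ≤ 𝒜.card * (2 * m + 1) ^ D := by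
    apply Finset.card_biUnion_le_card_mul
    intro A hAA
    refine Finset.card_image_le.trans ?_
    rw [Finset.card_pi, Finset.prod_const, Int.card_Icc]
    have : ((m : ℤ) + 1 - -(m : ℤ)).toNat = 2 * m + 1 := by omega
    rw [this]
    exact Nat.pow_le_pow_right (by omega) (hA A hAA)
  refine le_trans (cover_le_of_code S α
    (fun y => E (s y) (fun i _ => ⌊(m : ℝ) * ⟪y, e i⟫⌋)) F ?_ ?_) (by exact_mod_cast hF)
  · intro y hy
    refine Finset.mem_biUnion.2 ⟨s y, (hs y hy).1, Finset.mem_image_of_mem _ ?_⟩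
    rw [Finset.mem_pi]
    intro i _
    have h1 : |⟪y, e i⟫| ≤ 1 := by
      refine (abs_real_inner_le_norm _ _).trans ?_
      rw [he.1 i, mul_one]; exact (hS y hy).1
    obtain ⟨h2, h3⟩ := abs_le.1 h1
    rw [Finset.mem_Icc]
    constructor
    · rw [Int.le_floor]; push_cast; nlinarith
    · have : ((⌊(m : ℝ) * ⟪y, e i⟫⌋ : ℤ) : ℝ) ≤ m := (Int.floor_le _).trans (by nlinarith)
      exact_mod_cast this
  · intro x hx y hy hxy
    have hA1 : s x = s y := congrArg Prod.fst hxy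
    have hfl : ∀ i ∈ s x, ⌊(m : ℝ) * ⟪x, e i⟫⌋ = ⌊(m : ℝ) * ⟪y, e i⟫⌋ := by
      intro i hi
      have h2 := congrFun (congrArg Prod.snd hxy) i
      have hi' : i ∈ s y := hA1 ▸ hi
      simpa only [E, hi, hi', dif_pos] using h2
    have hxr := span_repr e he _ x (hs x hx).2
    have hyr := span_repr e he _ y (hs y hy).2
    rw [← hA1] at hyr
    have hsub : x - y = ∑ i ∈ s x, (⟪x, e i⟫ - ⟪y, e i⟫) • e i := by
      simp only [sub_smul, Finset.sum_sub_distrib]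
      rw [← hxr, ← hyr]
    rw [hsub]
    calc _ ≤ ∑ i ∈ s x, ‖(⟪x, e i⟫ - ⟪y, e i⟫) • e i‖ := norm_sum_le _ _
      _ ≤ ∑ i ∈ s x, (1 / (m : ℝ)) := by
          apply Finset.sum_le_sum
          intro i hi
          rw [norm_smul, he.1 i, mul_one, Real.norm_eq_abs, le_div_iff₀ hm']
          have := Int.abs_sub_lt_one_of_floor_eq_floor (hfl i hi)
          rw [← mul_sub, abs_mul, abs_of_pos hm'] at this
          linarith
      _ = (s x).card / (m : ℝ) := by simp [div_eq_mul_inv]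
      _ ≤ D / (m : ℝ) := by
          gcongr
          exact hA _ (hs x hx).1
      _ ≤ α := by rw [div_le_iff₀ hm']; exact hmα

lemma boxDim_le_of {H : Type*} [NormedAddCommGroup H] (S : Set H) (D : ℕ) (C : ℝ) (hC : 1 ≤ C)
    (h : ∀ α : ℝ, 0 < α → α < 1 → ∃ n : ℕ, coveringNumber S α ≤ (n : ℕ∞) ∧
      (n : ℝ) ≤ C * (1 / α) ^ D) :
    boxDim S ≤ ((D : ℝ) : EReal) := by
  have hlog : Tendsto (fun α : ℝ => Real.log (1 / α)) (nhdsWithin (0 : ℝ) (Set.Ioi 0)) atTop := by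
    simp only [one_div]
    exact Real.tendsto_log_atTop.comp tendsto_inv_nhdsGT_zero
  have hlim : Tendsto (fun α : ℝ => ((Real.log C * (Real.log (1 / α))⁻¹ + D : ℝ) : EReal))
      (nhdsWithin (0 : ℝ) (Set.Ioi 0)) (nhds ((D : ℝ) : EReal)) := by
    apply (continuous_coe_real_ereal.tendsto _).comp
    have := (hlog.inv_tendsto_atTop.const_mul (Real.log C)).add_const (D : ℝ)
    simpa using this
  rw [← hlim.limsup_eq]
  unfold boxDim
  refine Filter.limsup_le_limsup ?_
  · have hIoo : Set.Ioo (0 : ℝ) 1 ∈ nhdsWithin (0 : ℝ) (Set.Ioi 0) :=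
      Ioo_mem_nhdsGT one_pos
    filter_upwards [hIoo] with α hα
    obtain ⟨n, hn1, hn2⟩ := h α hα.1 hα.2
    have hne : coveringNumber S α ≠ ⊤ := ne_top_of_le_ne_top (ENat.natCast_ne_top n) hn1
    obtain ⟨N, hN⟩ := ENat.ne_top_iff_exists.1 hne
    have hNn : N ≤ n := by rw [← hN] at hn1; exact_mod_cast hn1
    have h1α : 1 < 1 / α := by rw [lt_div_iff₀ hα.1]; linarith [hα.2]
    have hL : 0 < Real.log (1 / α) := Real.log_pos h1α
    have hval : logCover S α = ((Real.log (N : ℝ) : ℝ) : EReal) := by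
      unfold logCover
      rw [dif_neg hne]
      have : (coveringNumber S α).untop hne = N := by
        exact (WithTop.untop_eq_iff hne).2 hN.symm
      rw [this]
    rw [hval, ← EReal.coe_mul, EReal.coe_le_coe_iff]
    have hpow : (1 : ℝ) ≤ (1 / α) ^ D := one_le_pow₀ h1α.le
    have hlogN : Real.log N ≤ Real.log C + D * Real.log (1 / α) := by
      have e1 : Real.log (C * (1 / α) ^ D) = Real.log C + D * Real.log (1 / α) := by
        rw [Real.log_mul (by positivity) (by positivity), Real.log_pow]
      rw [← e1]
      rcases Nat.eq_zero_or_pos N with h0 | h0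
      · rw [h0]; simp only [Nat.cast_zero, Real.log_zero]
        exact Real.log_nonneg (by nlinarith)
      · apply Real.log_le_log (by exact_mod_cast h0)
        exact le_trans (by exact_mod_cast hNn) hn2
    calc _ ≤ (Real.log C + D * Real.log (1 / α)) * (Real.log (1 / α))⁻¹ := by gcongr
      _ = _ := by field_simp

lemma sparse_support {H : Type*} [NormedAddCommGroup H] [InnerProductSpace ℝ H]
    {I : Type*} (e : I → H) (J : ℕ)
    (G : Fin J → Finset (Finset I)) (k d : Fin J → ℕ)
    (hd : ∀ j, ∀ g ∈ G j, g.card ≤ d j) (x : H) (hx : x ∈ sparsityInLevels e G k) :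
    ∃ A : Finset I, A ⊆ (Finset.univ.biUnion fun j => (G j).biUnion id) ∧
      A.card ≤ ∑ j, k j * d j ∧ x ∈ Submodule.span ℝ (e '' (A : Set I)) := by
  obtain ⟨c, hc, rfl⟩ := hx
  choose T hTG hTk hTc using hc
  refine ⟨Finset.univ.biUnion fun j => (T j).biUnion id, ?_, ?_, ?_⟩
  · intro i
    simp only [Finset.mem_biUnion, Finset.mem_univ, true_and, id]
    rintro ⟨j, g, hg, hi⟩
    exact ⟨j, g, hTG j hg, hi⟩
  · refine Finset.card_biUnion_le.trans (Finset.sum_le_sum fun j _ => ?_)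
    refine (Finset.card_biUnion_le_card_mul _ _ (d j) fun g hg => hd j g (hTG j hg)).trans ?_
    exact Nat.mul_le_mul_right _ (hTk j)
  · refine Submodule.sum_mem _ fun j _ => ?_
    rw [hTc j]
    refine Submodule.sum_mem _ fun g hg => Submodule.sum_mem _ fun i hi => ?_
    refine Submodule.smul_mem _ _ (Submodule.subset_span ⟨i, ?_, rfl⟩)
    simp only [Finset.coe_biUnion, Set.mem_iUnion]
    exact ⟨j, Finset.mem_coe.2 (Finset.mem_univ j), g, hg, hi⟩

/-- the normalized secant set of a structured-sparsity-in-levels model has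
upper box-counting dimension at most `2·Σ_j k_j d_j`; in particular it is finite. -/
theorem stmt7 {H : Type*} [NormedAddCommGroup H] [InnerProductSpace ℝ H] [CompleteSpace H]
    {I : Type*} (e : I → H) (he : Orthonormal ℝ e)
    (J : ℕ) (lvl : I → Fin J)
    (G : Fin J → Finset (Finset I)) (k d : Fin J → ℕ)
    (hlvl : ∀ j, ∀ g ∈ G j, ∀ i ∈ g, lvl i = j)
    (hdisj : ∀ j, ∀ g ∈ G j, ∀ g' ∈ G j, g ≠ g' → Disjoint g g')
    (hd : ∀ j, ∀ g ∈ G j, g.card ≤ d j) :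
    boxDim (normSecant (sparsityInLevels e G k))
        ≤ (((2 : ℝ) * ∑ j, (k j : ℝ) * (d j : ℝ)) : EReal) ∧
    boxDim (normSecant (sparsityInLevels e G k)) < ⊤ := by
  set D : ℕ := 2 * ∑ j, k j * d j with hD
  have hcast : (((2 : ℝ) * ∑ j, (k j : ℝ) * (d j : ℝ)) : EReal) = ((D : ℝ) : EReal) := by
    have hr : (D : ℝ) = 2 * ∑ j, (k j : ℝ) * (d j : ℝ) := by rw [hD]; push_cast; rfl
    have hsum : ∀ s : Finset (Fin J), ((∑ j ∈ s, (k j : ℝ) * (d j : ℝ) : ℝ) : EReal)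
        = ∑ j ∈ s, ((k j : ℝ) : EReal) * ((d j : ℝ) : EReal) := by
      intro s
      induction s using Finset.induction_on with
      | empty => simp
      | insert a s ha ih =>
        rw [Finset.sum_insert ha, Finset.sum_insert ha, EReal.coe_add, ih, EReal.coe_mul]
    rw [hr, EReal.coe_mul, hsum]
  have key : boxDim (normSecant (sparsityInLevels e G k)) ≤ ((D : ℝ) : EReal) := by
    set U : Finset I := Finset.univ.biUnion fun j => (G j).biUnion id
    set 𝒜 : Finset (Finset I) := U.powerset.filter (fun A => A.card ≤ D) with h𝒜
    have hcard : 1 ≤ 𝒜.card := by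
      refine Finset.card_pos.2 ⟨∅, ?_⟩
      simp [h𝒜]
    have hcard' : (1 : ℝ) ≤ 𝒜.card := by exact_mod_cast hcard
    have hS : ∀ y ∈ normSecant (sparsityInLevels e G k), ‖y‖ ≤ 1 ∧
        ∃ A ∈ 𝒜, y ∈ Submodule.span ℝ (e '' (A : Set I)) := by
      rintro z ⟨y, ⟨u, hu, v, hv, rfl⟩, hy, rfl⟩
      obtain ⟨A, hA1, hA2, hA3⟩ := sparse_support e J G k d hd u hu
      obtain ⟨B, hB1, hB2, hB3⟩ := sparse_support e J G k d hd v hv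
      constructor
      · rw [norm_smul, norm_inv, norm_norm, inv_mul_cancel₀ (norm_ne_zero_iff.2 hy)]
      · refine ⟨A ∪ B, ?_, ?_⟩
        · rw [h𝒜, Finset.mem_filter, Finset.mem_powerset]
          refine ⟨Finset.union_subset hA1 hB1, (Finset.card_union_le _ _).trans ?_⟩
          omega
        · refine Submodule.smul_mem _ _ (Submodule.sub_mem _ ?_ ?_)
          · exact Submodule.span_mono (Set.image_mono (by simp)) hA3
          · exact Submodule.span_mono (Set.image_mono (by simp)) hB3
    apply boxDim_le_of _ D (𝒜.card * (2 * D + 5) ^ D)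
    · have : (1 : ℝ) ≤ (2 * D + 5 : ℝ) ^ D :=
        one_le_pow₀ (by have : (0 : ℝ) ≤ D := Nat.cast_nonneg D
                        linarith)
      nlinarith
    · intro α h0 h1
      have hD0 : (0 : ℝ) ≤ D := Nat.cast_nonneg D
      have hq : 0 ≤ (D : ℝ) / α := by positivity
      have hm1 := Nat.le_ceil ((D : ℝ) / α)
      have hm2 := Nat.ceil_lt_add_one hq
      refine ⟨_, cover_bound_s7 e he _ 𝒜 D (fun A hA => (Finset.mem_filter.1 hA).2) hS α
        (⌈(D : ℝ) / α⌉₊ + 1) (by omega) ?_, ?_⟩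
      · push_cast
        rw [div_le_iff₀ h0] at hm1
        nlinarith
      · push_cast
        rw [mul_assoc, ← mul_pow]
        gcongr
        have h2 : (2 * (D : ℝ) + 5) * (1 / α) = 2 * (D / α) + 5 * (1 / α) := by ring
        have h3 : 1 ≤ 1 / α := by rw [le_div_iff₀ h0]; linarith
        rw [h2]
        linarith
  rw [hcast]
  exact ⟨key, lt_of_le_of_lt key (EReal.coe_lt_top _)⟩
end
end

section
/- Let H be a Hilbert space, Σ ⊆ H, and α ∈ (0,1). Suppose the normalized secant set S(Σ) admits a finite α-cover: there exist c_1,…,c_N ∈ S(Σ) such that every y ∈ S(Σ) satisfies ‖y − c_i‖_H ≤ α for some i. Let H₀ := span{c_1,…,c_N} and let P_{H₀} denote the orthogonal projection onto H₀. Then H₀ is a finite-dimensional subspace (of dimension at most N) and for every x ∈ Σ−Σ: (1−α)·‖x‖_H ≤ ‖P_{H₀} x‖_H ≤ ‖x‖_H. -/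
noncomputable section
open scoped ENNReal NNReal Pointwise RealInnerProductSpace
open Filter Set Classical MeasureTheory ProbabilityTheory

/-- the span of the centers of a finite `α`-cover of the normalized secant set
is a finite-dimensional subspace whose orthogonal projection preserves the norms of all
secant vectors up to a factor `1 - α`. -/
theorem stmt8 {H : Type*} [NormedAddCommGroup H] [InnerProductSpace ℝ H] [CompleteSpace H]
    (S : Set H) (α : ℝ) (hα0 : 0 < α) (hα1 : α < 1)
    (N : ℕ) (c : Fin N → H) (hc : ∀ i, c i ∈ normSecant S)
    (hcover : ∀ y ∈ normSecant S, ∃ i, ‖y - c i‖ ≤ α) :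
    haveI : FiniteDimensional ℝ (Submodule.span ℝ (Set.range c)) :=
      FiniteDimensional.span_of_finite ℝ (Set.finite_range c)
    Module.finrank ℝ (Submodule.span ℝ (Set.range c)) ≤ N ∧
    ∀ x ∈ secantSet S,
      (1 - α) * ‖x‖ ≤ ‖(Submodule.orthogonalProjectionOnto (Submodule.span ℝ (Set.range c)) x : H)‖ ∧
      ‖(Submodule.orthogonalProjectionOnto (Submodule.span ℝ (Set.range c)) x : H)‖ ≤ ‖x‖ := by
  haveI : FiniteDimensional ℝ (Submodule.span ℝ (Set.range c)) :=
    FiniteDimensional.span_of_finite ℝ (Set.finite_range c)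
  have hle : ∀ z : H, ‖(Submodule.orthogonalProjectionOnto
      (Submodule.span ℝ (Set.range c)) z : H)‖ ≤ ‖z‖ := fun z =>
    Submodule.norm_orthogonalProjectionOnto_apply_le _ z
  refine ⟨?_, fun x hx => ⟨?_, hle x⟩⟩
  · simpa [Set.finrank] using finrank_range_le_card (R := ℝ) c
  by_cases hx0 : x = 0
  · simp [hx0]
  have hn : 0 < ‖x‖ := norm_pos_iff.2 hx0
  obtain ⟨i, hi⟩ := hcover (‖x‖⁻¹ • x) ⟨x, hx, hx0, rfl⟩
  have hc1 : ‖c i‖ = 1 := by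
    obtain ⟨y, _, hy0, hy⟩ := hc i
    rw [hy, norm_smul, norm_inv, norm_norm, inv_mul_cancel₀ (norm_ne_zero_iff.2 hy0)]
  have hP : (Submodule.orthogonalProjectionOnto (Submodule.span ℝ (Set.range c)) (c i) : H)
      = c i := congrArg Subtype.val (Submodule.orthogonalProjectionOnto_mem_subspace_eq_self (K := Submodule.span ℝ (Set.range c)) ⟨c i,
        Submodule.subset_span ⟨i, rfl⟩⟩)
  have h1 := (hle (‖x‖⁻¹ • x - c i)).trans hi
  rw [map_sub, map_smul, Submodule.coe_sub, Submodule.coe_smul, hP] at h1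
  have h2 := norm_sub_norm_le (c i) (‖x‖⁻¹ • (Submodule.orthogonalProjectionOnto
      (Submodule.span ℝ (Set.range c)) x : H))
  rw [norm_sub_rev, norm_smul, norm_inv, norm_norm, hc1] at h2
  have h3 := h2.trans h1
  rw [inv_mul_eq_div] at h3
  rw [← le_div_iff₀ hn]
  linarith
end
end

section
/- Let H and F be Hilbert spaces, Σ ⊆ H, and A : H → F a continuous linear operator. Suppose there exist a map Δ : F → H and a constant C ≥ 0 such that for every x ∈ Σ and every e ∈ F one has ‖Δ(Ax + e) − x‖_H ≤ C·‖e‖_F (a stable decoder for Σ). Then A satisfies the lower restricted isometry inequality ‖u‖_H ≤ C·‖Au‖_F for every u in the secant set Σ−Σ := {x−x' : x,x' ∈ Σ}. -/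
noncomputable section
open scoped ENNReal NNReal Pointwise RealInnerProductSpace
open Filter Set Classical MeasureTheory ProbabilityTheory

/-- the existence of a stable decoder implies the lower restricted isometry
inequality on the secant set. -/
theorem stmt10 {H F : Type*} [NormedAddCommGroup H] [InnerProductSpace ℝ H] [CompleteSpace H]
    [NormedAddCommGroup F] [InnerProductSpace ℝ F] [CompleteSpace F]
    (S : Set H) (A : H →L[ℝ] F) (Δ : F → H) (C : ℝ) (hC : 0 ≤ C)
    (hdec : ∀ x ∈ S, ∀ e : F, ‖Δ (A x + e) - x‖ ≤ C * ‖e‖) :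
    ∀ u ∈ secantSet S, ‖u‖ ≤ C * ‖A u‖ := by
  rintro u ⟨x, hx, y, hy, rfl⟩
  have h1 := hdec x hx 0
  rw [add_zero, norm_zero, mul_zero] at h1
  have h2 : Δ (A x) = x := sub_eq_zero.mp (norm_le_zero_iff.mp h1)
  have h3 := hdec y hy (A x - A y)
  rw [add_sub_cancel, h2] at h3
  rw [map_sub]
  exact h3
end
end

section
/- Let H = H_1 ⊕ … ⊕ H_J be an orthogonal decomposition of a Hilbert space, F = F_1 ⊕ … ⊕ F_J an orthogonal decomposition of another Hilbert space, and A : H → F block diagonal, i.e. A(x_1,…,x_J) = (A_1 x_1, …, A_J x_J) for continuous linear operators A_j : H_j → F_j. Let Σ_j ⊆ H_j with 0 ∈ Σ_j for each j, and let Σ := Σ_1 × … × Σ_J ⊆ H. Then for any δ ∈ [0,1): A satisfies the RIP on Σ−Σ with constant δ if and only if every block A_j satisfies the RIP on Σ_j−Σ_j with constant δ. -/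
noncomputable section
open scoped ENNReal NNReal Pointwise RealInnerProductSpace
open Filter Set Classical MeasureTheory ProbabilityTheory

/-- a block-diagonal operator satisfies the RIP on the secant set of a
product model (each factor containing `0`) iff each block satisfies the RIP on the secant
set of the corresponding factor, with the same constant. -/
theorem stmt12 {J : ℕ} (Hs Fs : Fin J → Type*)
    [∀ j, NormedAddCommGroup (Hs j)] [∀ j, InnerProductSpace ℝ (Hs j)]
    [∀ j, CompleteSpace (Hs j)]
    [∀ j, NormedAddCommGroup (Fs j)] [∀ j, InnerProductSpace ℝ (Fs j)]
    [∀ j, CompleteSpace (Fs j)]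
    (As : ∀ j, Hs j →L[ℝ] Fs j)
    (A : PiLp 2 Hs →L[ℝ] PiLp 2 Fs)
    (hA : ∀ (x : PiLp 2 Hs) (j : Fin J), A x j = As j (x j))
    (Ss : ∀ j, Set (Hs j)) (h0 : ∀ j, (0 : Hs j) ∈ Ss j)
    (δ : ℝ) (hδ0 : 0 ≤ δ) (hδ1 : δ < 1) :
    SatisfiesRIP A {x : PiLp 2 Hs | ∀ j, x j ∈ Ss j} δ ↔
      ∀ j, SatisfiesRIP (As j) (Ss j) δ := by
  constructor
  · rintro h j _ ⟨a, ha, b, hb, rfl⟩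
    have key : ∀ c ∈ Ss j, ∀ i, (WithLp.toLp 2 (Pi.single j c) : PiLp 2 Hs) i ∈ Ss i := by
      intro c hc i
      by_cases hij : i = j
      · subst hij
        simpa using hc
      · simpa [Pi.single_eq_of_ne hij] using h0 i
    have h1 := h _ ⟨WithLp.toLp 2 (Pi.single j a), key a ha,
      WithLp.toLp 2 (Pi.single j b), key b hb, rfl⟩
    have e : (WithLp.toLp 2 (Pi.single j a) - WithLp.toLp 2 (Pi.single j b) : PiLp 2 Hs)
        = WithLp.toLp 2 (Pi.single j (a - b)) := by
      rw [← WithLp.toLp_sub, Pi.single_sub]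
    have e2 : A (WithLp.toLp 2 (Pi.single j (a - b)))
        = WithLp.toLp 2 (Pi.single j (As j (a - b))) := by
      ext i
      rw [hA]
      by_cases hij : i = j
      · subst hij
        simp
      · simp [Pi.single_eq_of_ne hij]
    rw [e, e2, PiLp.norm_toLp_single, PiLp.norm_toLp_single] at h1
    exact h1
  · rintro h _ ⟨x, hx, y, hy, rfl⟩
    have h1 : ∀ j, _ := fun j => h j ((x - y) j) ⟨x j, hx j, y j, hy j, rfl⟩
    rw [PiLp.norm_sq_eq_of_L2, PiLp.norm_sq_eq_of_L2, Finset.mul_sum, Finset.mul_sum]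
    simp only [hA]
    exact ⟨Finset.sum_le_sum fun j _ => (h1 j).1, Finset.sum_le_sum fun j _ => (h1 j).2⟩
end
end

section
/- Let Σ be a nonzero linear subspace of a real or complex Hilbert space H and let f := ι_Σ be its characteristic function (ι_Σ(x) = 0 if x ∈ Σ and +∞ otherwise). Then δ_Σ(f) = 1. -/
noncomputable section
open scoped ENNReal NNReal Pointwise RealInnerProductSpace
open Filter Set Classical MeasureTheory ProbabilityTheory

lemma sigmaNorm_eq_norm {𝕜 : Type*} [RCLike 𝕜] {H : Type*}
    [NormedAddCommGroup H] [InnerProductSpace 𝕜 H]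
    [NormedSpace ℝ H] [IsScalarTower ℝ 𝕜 H]
    (W : Submodule 𝕜 H) (hW : W ≠ ⊥) (y : H) (hy : y ∈ W) :
    sigmaNorm (W : Set H) y = ENNReal.ofReal ‖y‖ := by
  have hsm : ∀ w ∈ W, ∀ r : ℝ, r • w ∈ W := by
    intro w hw r
    have h : r • w = (r • (1 : 𝕜)) • w := by rw [smul_assoc, one_smul]
    rw [h]
    exact W.smul_mem _ hw
  have hunit : ∀ w ∈ W, w ≠ 0 → ‖w‖⁻¹ • w ∈
      closure (convexHull ℝ ((W : Set H) ∩ {u : H | ‖u‖ = 1})) := by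
    intro w hw h0
    apply subset_closure
    apply subset_convexHull
    refine ⟨hsm w hw _, ?_⟩
    have : ‖w‖ ≠ 0 := norm_ne_zero_iff.mpr h0
    simp [norm_smul, this]
  unfold sigmaNorm atomicNorm
  apply le_antisymm
  · apply sInf_le
    refine ⟨‖y‖, norm_nonneg _, rfl, ?_⟩
    by_cases h0 : y = 0
    · obtain ⟨w, hw, hw0⟩ := W.exists_mem_ne_zero_of_ne_bot hW
      exact ⟨_, hunit w hw hw0, by simp [h0]⟩
    · refine ⟨_, hunit y hy h0, ?_⟩
      exact smul_inv_smul₀ (norm_ne_zero_iff.mpr h0) y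
  · apply le_sInf
    rintro t ⟨r, hr, rfl, v, hv, rfl⟩
    apply ENNReal.ofReal_le_ofReal
    have hsub : closure (convexHull ℝ ((W : Set H) ∩ {u : H | ‖u‖ = 1})) ⊆
        Metric.closedBall 0 1 := by
      apply closure_minimal _ Metric.isClosed_closedBall
      apply convexHull_min _ (convex_closedBall _ _)
      rintro u ⟨-, hu⟩
      have hu' : ‖u‖ = 1 := hu
      simp [hu']
    have hv1 : ‖v‖ ≤ 1 := by simpa using hsub hv
    simp only [norm_smul, Real.norm_eq_abs, abs_of_nonneg hr]
    nlinarith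

/-- for a nonzero linear subspace `Σ` of a real or complex Hilbert space and
`f = ι_Σ` its characteristic function, `δ_Σ(f) = 1`. -/
theorem stmt14 {𝕜 : Type*} [RCLike 𝕜] {H : Type*}
    [NormedAddCommGroup H] [InnerProductSpace 𝕜 H] [CompleteSpace H]
    [NormedSpace ℝ H] [IsScalarTower ℝ 𝕜 H]
    (W : Submodule 𝕜 H) (hW : W ≠ ⊥) :
    deltaSigma 𝕜 (W : Set H) (fun x => if x ∈ W then 0 else ⊤) = 1 := by
  have hset : ∀ z ∈ W, z ≠ 0 →
      sSup {c : ℝ | ∃ x : H, deltaAdmissible 𝕜 (W : Set H) z x ∧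
        c = deltaXZ 𝕜 (W : Set H) x z} = 1 := by
    intro z hz hz0
    have hzn : 0 < ‖z‖ := norm_pos_iff.mpr hz0
    have key : ∀ x ∈ W, (sigmaNorm (W : Set H) (x + z)).toReal ^ 2 - ‖x‖ ^ 2
        - 2 * RCLike.re (inner 𝕜 x z : 𝕜) = ‖z‖ ^ 2 := by
      intro x hx
      rw [sigmaNorm_eq_norm W hW _ (W.add_mem hx hz), ENNReal.toReal_ofReal (norm_nonneg _),
        norm_add_sq (𝕜 := 𝕜) x z]
      ring
    have hd : ∀ x ∈ W, deltaXZ 𝕜 (W : Set H) x z =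
        (-(RCLike.re (inner 𝕜 x z : 𝕜))) / (‖x‖ * ‖z‖) := by
      intro x hx
      unfold deltaXZ
      rw [key x hx, Real.sqrt_sq hzn.le, if_neg]
      rw [sigmaNorm_eq_norm W hW _ (W.add_mem hx hz)]
      exact ENNReal.ofReal_ne_top
    apply IsGreatest.csSup_eq
    constructor
    · refine ⟨-z, ⟨W.neg_mem hz, neg_ne_zero.mpr hz0, Or.inr ?_⟩, ?_⟩
      · rw [key _ (W.neg_mem hz)]
        positivity
      · rw [hd _ (W.neg_mem hz), inner_neg_left, map_neg, neg_neg, norm_neg,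
          inner_self_eq_norm_mul_norm, div_self (by positivity)]
    · rintro c ⟨x, ⟨hx, hx0, -⟩, rfl⟩
      have hxn : 0 < ‖x‖ := norm_pos_iff.mpr hx0
      rw [hd x hx, div_le_one (by positivity)]
      have h1 := re_inner_le_norm (𝕜 := 𝕜) (-x) z
      rwa [inner_neg_left, map_neg, norm_neg] at h1
  unfold deltaSigma
  have hS : {d : ℝ | ∃ z ∈ descentSet (W : Set H) (fun x => if x ∈ W then (0 : ℝ≥0∞) else ⊤),
      z ≠ 0 ∧ d = sSup {c : ℝ | ∃ x : H, deltaAdmissible 𝕜 (W : Set H) z x ∧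
        c = deltaXZ 𝕜 (W : Set H) x z}} = {1} := by
    ext d
    constructor
    · rintro ⟨z, ⟨x, hx, hxz⟩, hz0, rfl⟩
      have hx' : x ∈ W := hx
      have hz : z ∈ W := by
        by_contra hcon
        have : x + z ∉ W := fun h => hcon ((W.add_mem_iff_right hx').mp h)
        simp [hx', this] at hxz
      exact hset z hz hz0
    · rintro rfl
      obtain ⟨w, hw, hw0⟩ := W.exists_mem_ne_zero_of_ne_bot hW
      refine ⟨w, ⟨0, W.zero_mem, ?_⟩, hw0, (hset w hw hw0).symm⟩
      simp [hw]
  rw [hS, csInf_singleton]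
end
end

section
/- Let H be the Hilbert space of real n×n matrices equipped with the Frobenius inner product, let 1 ≤ r ≤ n, let Σ := {M ∈ ℝ^{n×n} : rank(M) ≤ r} (a union of linear subspaces of H), and let f be the nuclear norm (the sum of the singular values). Then δ_Σ(f) ≥ 1/√2. -/
noncomputable section
open scoped ENNReal NNReal Pointwise RealInnerProductSpace
open Filter Set Classical MeasureTheory ProbabilityTheory

/-- The nuclear norm of a real square matrix: the sum of its singular values, i.e. of the
square roots of the eigenvalues of `AᴴA`. -/
def nuclearNorm (n : ℕ) (A : Matrix (Fin n) (Fin n) ℝ) : ℝ :=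
  ∑ i, Real.sqrt ((Matrix.isHermitian_conjTranspose_mul_self A).eigenvalues i)

open Matrix in
structure IsSVD {n : ℕ} (M U V : Matrix (Fin n) (Fin n) ℝ) (s : Fin n → ℝ) : Prop where
  hU : Uᵀ * U = 1
  hV : Vᵀ * V = 1
  anti : Antitone s
  nonneg : ∀ i, 0 ≤ s i
  eq : M = U * Matrix.diagonal s * Vᵀ

lemma exists_sort {ι : Type*} [Fintype ι] {N : ℕ} (h : Fintype.card ι = N) (f : ι → ℝ) :
    ∃ e : Fin N ≃ ι, Antitone (f ∘ e) := by
  let e0 : Fin N ≃ ι := (Fintype.equivFinOfCardEq h).symm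
  let g : Fin N → ℝ := fun i => - f (e0 i)
  refine ⟨(Tuple.sort g).trans e0, fun i j hij => ?_⟩
  have := Tuple.monotone_sort g hij
  simp only [g, Function.comp] at this ⊢
  simpa using this

open Matrix in
lemma exists_svd {n : ℕ} (M : Matrix (Fin n) (Fin n) ℝ) :
    ∃ U V s, IsSVD M U V s ∧ ∑ i, s i = nuclearNorm n M ∧
      Fintype.card {i // s i ≠ 0} = M.rank := by
  set hG := Matrix.isHermitian_conjTranspose_mul_self M with hGdef
  have hpsd := Matrix.posSemidef_conjTranspose_mul_self M
  set V : Matrix (Fin n) (Fin n) ℝ := (hG.eigenvectorUnitary).1 with hVdef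
  have hVV : Vᵀ * V = 1 := by
    have := Unitary.coe_star_mul_self hG.eigenvectorUnitary
    rwa [Matrix.star_eq_conjTranspose, Matrix.conjTranspose_eq_transpose_of_trivial] at this
  have hVV' : V * Vᵀ = 1 := mul_eq_one_comm.mp hVV
  have hdiag : Vᵀ * (Mᵀ * M) * V = Matrix.diagonal hG.eigenvalues := by
    have := hG.conjStarAlgAut_star_eigenvectorUnitary
    rw [Unitary.conjStarAlgAut_star_apply] at this
    have h : star V * (Mᴴ * M) * V = Matrix.diagonal hG.eigenvalues := this
    rw [← h, Matrix.star_eq_conjTranspose, Matrix.conjTranspose_eq_transpose_of_trivial V,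
      Matrix.conjTranspose_eq_transpose_of_trivial M]
  have hlam : ∀ i, 0 ≤ hG.eigenvalues i := hpsd.eigenvalues_nonneg
  set s : Fin n → ℝ := fun i => Real.sqrt (hG.eigenvalues i) with hs
  have hss : ∀ i, s i * s i = hG.eigenvalues i := fun i => Real.mul_self_sqrt (hlam i)
  have hinner : ∀ i j, ∑ k, (M * V) k i * (M * V) k j = if i = j then s i * s i else 0 := by
    intro i j
    have := congrFun (congrFun hdiag i) j
    have h2 : Vᵀ * (Mᵀ * M) * V = (M * V)ᵀ * (M * V) := by
      simp [Matrix.transpose_mul, mul_assoc]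
    rw [h2, Matrix.mul_apply, Matrix.diagonal_apply] at this
    simp only [Matrix.transpose_apply] at this
    rw [this, hss]
  let b : Fin n → EuclideanSpace ℝ (Fin n) :=
    fun i => WithLp.toLp 2 (fun k => (s i)⁻¹ * (M * V) k i)
  let S : Set (Fin n) := {i | s i ≠ 0}
  have horth : Orthonormal ℝ (S.domRestrict b) := by
    rw [orthonormal_iff_ite]
    rintro ⟨i, hi⟩ ⟨j, hj⟩
    have hi' : s i ≠ 0 := hi
    have hj' : s j ≠ 0 := hj
    have : inner ℝ (b i) (b j) = (s i)⁻¹ * (s j)⁻¹ * ∑ k, (M * V) k i * (M * V) k j := by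
      simp only [b, PiLp.inner_apply, Finset.mul_sum]
      refine Finset.sum_congr rfl fun k _ => ?_
      simp; ring
    simp only [Set.domRestrict_apply, this, hinner, Subtype.mk.injEq]
    split_ifs with h
    · subst h; field_simp
    · simp
  obtain ⟨u, hu⟩ := horth.exists_orthonormalBasis_extension_of_card_eq (by simp)
  let U : Matrix (Fin n) (Fin n) ℝ := Matrix.of fun i k => u k i
  have hUU : Uᵀ * U = 1 := by
    ext i j
    have := (orthonormal_iff_ite.mp u.orthonormal) i j
    simp only [PiLp.inner_apply] at this
    simp only [Matrix.mul_apply, Matrix.one_apply, Matrix.transpose_apply, U, Matrix.of_apply]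
    rw [← this]
    refine Finset.sum_congr rfl fun k _ => ?_
    simp; ring
  have hMV : M * V = U * Matrix.diagonal s := by
    ext k i
    rw [Matrix.mul_diagonal]
    by_cases h : s i = 0
    · have := hinner i i
      simp only [h, if_true, mul_zero] at this
      rw [Finset.sum_eq_zero_iff_of_nonneg (fun _ _ => mul_self_nonneg _)] at this
      have := this k (Finset.mem_univ _)
      rw [h, mul_zero]; exact mul_self_eq_zero.mp this
    · have := hu i h
      simp only [U, Matrix.of_apply, this, b]
      field_simp
  obtain ⟨e, he⟩ := exists_sort (Fintype.card_fin n) s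
  refine ⟨U.submatrix id e, V.submatrix id e, s ∘ e, ⟨?_, ?_, he, fun i => Real.sqrt_nonneg _, ?_⟩, ?_, ?_⟩
  · rw [Matrix.transpose_submatrix, ← Matrix.submatrix_mul _ _ e id e Function.bijective_id, hUU]
    simp
  · rw [Matrix.transpose_submatrix, ← Matrix.submatrix_mul _ _ e id e Function.bijective_id, hVV]
    simp
  · have : Matrix.diagonal (s ∘ e) = (Matrix.diagonal s).submatrix e e := by simp
    rw [this, Matrix.transpose_submatrix, Matrix.submatrix_mul_equiv, Matrix.submatrix_mul_equiv,
      ← hMV, mul_assoc, hVV']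
    simp
  · rw [nuclearNorm]
    exact Equiv.sum_comp e s
  · rw [← Matrix.rank_conjTranspose_mul_self M, hG.rank_eq_card_non_zero_eigs]
    refine Fintype.card_congr (e.subtypeEquiv fun i => ?_)
    simp only [Function.comp, hs, ne_eq, Real.sqrt_eq_zero (hlam _)]

open Matrix in
lemma exists_spectral {ι : Type*} [Fintype ι] [DecidableEq ι] {N : ℕ}
    (hN : Fintype.card ι = N) (C : Matrix ι ι ℝ) (hC : C.IsHermitian) :
    ∃ (μ : Fin N → ℝ) (L : (ι → ℝ) →ₗ[ℝ] (Fin N → ℝ)), Antitone μ ∧ C.trace = ∑ k, μ k ∧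
      (∀ y, y ⬝ᵥ y = ∑ k, (L y k)^2) ∧ (∀ y, y ⬝ᵥ (C *ᵥ y) = ∑ k, μ k * (L y k)^2) := by
  obtain ⟨e, he⟩ := exists_sort hN hC.eigenvalues
  set Q : Matrix ι ι ℝ := (hC.eigenvectorUnitary).1 with hQ
  have hQQ : Q * Qᵀ = 1 := by
    have := Unitary.coe_star_mul_self hC.eigenvectorUnitary
    apply mul_eq_one_comm.mp
    rwa [Matrix.star_eq_conjTranspose, Matrix.conjTranspose_eq_transpose_of_trivial] at this
  have hdiag : C = Q * Matrix.diagonal hC.eigenvalues * Qᵀ := by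
    have := hC.spectral_theorem
    rw [Unitary.conjStarAlgAut_apply] at this
    simpa [Matrix.star_eq_conjTranspose, Matrix.conjTranspose_eq_transpose_of_trivial] using this
  refine ⟨hC.eigenvalues ∘ e, (LinearMap.funLeft ℝ ℝ e).comp (Matrix.mulVecLin Qᵀ), he, ?_, ?_, ?_⟩
  · rw [hC.trace_eq_sum_eigenvalues]
    exact (Equiv.sum_comp e hC.eigenvalues).symm
  · intro y
    have : ∑ k, (Qᵀ *ᵥ y) (e k) ^ 2 = ∑ k, (Qᵀ *ᵥ y) k ^ 2 :=
      Equiv.sum_comp e (fun k => (Qᵀ *ᵥ y) k ^ 2)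
    simp only [LinearMap.comp_apply, LinearMap.funLeft_apply, Matrix.mulVecLin_apply, this]
    have h2 : (Qᵀ *ᵥ y) ⬝ᵥ (Qᵀ *ᵥ y) = y ⬝ᵥ y := by
      rw [Matrix.dotProduct_mulVec, Matrix.vecMul_transpose, Matrix.mulVec_mulVec, hQQ,
        Matrix.one_mulVec]
    rw [← h2, dotProduct]
    exact Finset.sum_congr rfl fun k _ => by ring
  · intro y
    have : ∑ k, hC.eigenvalues (e k) * (Qᵀ *ᵥ y) (e k) ^ 2
        = ∑ k, hC.eigenvalues k * (Qᵀ *ᵥ y) k ^ 2 :=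
      Equiv.sum_comp e (fun k => hC.eigenvalues k * (Qᵀ *ᵥ y) k ^ 2)
    simp only [LinearMap.comp_apply, LinearMap.funLeft_apply, Matrix.mulVecLin_apply, 
      Function.comp, this]
    conv_lhs => rw [hdiag]
    rw [← Matrix.mulVec_mulVec, ← Matrix.mulVec_mulVec, Matrix.dotProduct_mulVec,
      ← Matrix.mulVec_transpose, dotProduct]
    refine Finset.sum_congr rfl fun k _ => ?_
    rw [Matrix.mulVec_diagonal]; ring

lemma minmax {ι κ : Type*} [Fintype ι] [Fintype κ] {N : ℕ}
    (hN : Fintype.card ι = N) (C : Matrix ι ι ℝ)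
    (μ : Fin N → ℝ) (L : (ι → ℝ) →ₗ[ℝ] (Fin N → ℝ)) (hμ : Antitone μ)
    (h1 : ∀ y, y ⬝ᵥ y = ∑ k, (L y k)^2) (h2 : ∀ y, y ⬝ᵥ (C.mulVec y) = ∑ k, μ k * (L y k)^2)
    (k : Fin N) (c : ℝ) (G : (ι → ℝ) →ₗ[ℝ] (κ → ℝ)) (hk : Fintype.card κ + k < N)
    (hG : ∀ y, G y = 0 → c * (y ⬝ᵥ y) ≤ y ⬝ᵥ (C.mulVec y)) : c ≤ μ k := by
  let P : (ι → ℝ) →ₗ[ℝ] (κ ⊕ Fin k → ℝ) :=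
    LinearMap.pi (Sum.elim (fun i => (LinearMap.proj i).comp G)
      (fun i => (LinearMap.proj (Fin.castLT i (i.2.trans k.2))).comp L))
  have hker : LinearMap.ker P ≠ ⊥ := by
    apply LinearMap.ker_ne_bot_of_finrank_lt
    simp [hN, hk]
  obtain ⟨y, hy, hy0⟩ := (Submodule.ne_bot_iff _).mp hker
  rw [LinearMap.mem_ker] at hy
  have hGy : G y = 0 := by
    ext i; have := congrFun hy (Sum.inl i); simpa [P] using this
  have hLy : ∀ i : Fin N, i < k → L y i = 0 := by
    intro i hi
    have := congrFun hy (Sum.inr ⟨i, hi⟩); simpa [P] using this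
  have hpos : 0 < y ⬝ᵥ y := by
    rcases (show 0 ≤ y ⬝ᵥ y by rw [h1]; positivity).lt_or_eq with h | h
    · exact h
    · exact absurd (dotProduct_self_eq_zero.mp h.symm) hy0
  have hle : y ⬝ᵥ (C.mulVec y) ≤ μ k * (y ⬝ᵥ y) := by
    rw [h2, h1, Finset.mul_sum]
    refine Finset.sum_le_sum fun i _ => ?_
    rcases lt_or_ge i k with h | h
    · simp [hLy i h]
    · exact mul_le_mul_of_nonneg_right (hμ h) (sq_nonneg _)
  exact le_of_mul_le_mul_right ((hG y hGy).trans hle) hpos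
open Matrix in
lemma IsSVD.bilin {n : ℕ} {M U V : Matrix (Fin n) (Fin n) ℝ} {s : Fin n → ℝ}
    (h : IsSVD M U V s) (a b : Fin n → ℝ) :
    a ⬝ᵥ (M *ᵥ b) = ∑ i, s i * ((Uᵀ *ᵥ a) i * (Vᵀ *ᵥ b) i) := by
  conv_lhs => rw [h.eq]
  rw [← Matrix.mulVec_mulVec, ← Matrix.mulVec_mulVec, Matrix.dotProduct_mulVec,
      ← Matrix.mulVec_transpose, dotProduct]
  refine Finset.sum_congr rfl fun k _ => ?_
  rw [Matrix.mulVec_diagonal]; ring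

open Matrix in
lemma orth_dot {n : ℕ} {U : Matrix (Fin n) (Fin n) ℝ} (h : Uᵀ * U = 1) (a : Fin n → ℝ) :
    a ⬝ᵥ a = ∑ i, (Uᵀ *ᵥ a) i ^ 2 := by
  have h' : U * Uᵀ = 1 := mul_eq_one_comm.mp h
  have h2 : (Uᵀ *ᵥ a) ⬝ᵥ (Uᵀ *ᵥ a) = a ⬝ᵥ a := by
    rw [Matrix.dotProduct_mulVec, Matrix.vecMul_transpose, Matrix.mulVec_mulVec, h',
      Matrix.one_mulVec]
  rw [← h2, dotProduct]
  exact Finset.sum_congr rfl fun k _ => by ring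

open Matrix in
lemma orth_quad {n : ℕ} (U : Matrix (Fin n) (Fin n) ℝ) (s : Fin n → ℝ) (a : Fin n → ℝ) :
    a ⬝ᵥ ((U * Matrix.diagonal s * Uᵀ) *ᵥ a) = ∑ i, s i * (Uᵀ *ᵥ a) i ^ 2 := by
  rw [← Matrix.mulVec_mulVec, ← Matrix.mulVec_mulVec, Matrix.dotProduct_mulVec,
      ← Matrix.mulVec_transpose, dotProduct]
  refine Finset.sum_congr rfl fun k _ => ?_
  rw [Matrix.mulVec_diagonal]; ring

open Matrix in
/-- coordinates of the dilation -/
def coordL {n : ℕ} (U : Matrix (Fin n) (Fin n) ℝ) (i : Fin n) :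
    (Fin n ⊕ Fin n → ℝ) →ₗ[ℝ] ℝ :=
  (LinearMap.proj i).comp ((Matrix.mulVecLin Uᵀ).comp (LinearMap.funLeft ℝ ℝ Sum.inl))

open Matrix in
/-- coordinates of the dilation -/
def coordR {n : ℕ} (V : Matrix (Fin n) (Fin n) ℝ) (i : Fin n) :
    (Fin n ⊕ Fin n → ℝ) →ₗ[ℝ] ℝ :=
  (LinearMap.proj i).comp ((Matrix.mulVecLin Vᵀ).comp (LinearMap.funLeft ℝ ℝ Sum.inr))

open Matrix in
lemma weyl {n : ℕ} {M U V : Matrix (Fin n) (Fin n) ℝ} {s : Fin n → ℝ}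
    (h : IsSVD M U V s) (C : Matrix (Fin n ⊕ Fin n) (Fin n ⊕ Fin n) ℝ)
    (μ : Fin (n + n) → ℝ) (L : (Fin n ⊕ Fin n → ℝ) →ₗ[ℝ] (Fin (n + n) → ℝ)) (hμ : Antitone μ)
    (h1 : ∀ y, y ⬝ᵥ y = ∑ k, (L y k)^2) (h2 : ∀ y, y ⬝ᵥ (C.mulVec y) = ∑ k, μ k * (L y k)^2)
    (hge : ∀ y : Fin n ⊕ Fin n → ℝ, 2 * ((y ∘ Sum.inl) ⬝ᵥ (M *ᵥ (y ∘ Sum.inr))) ≤ y ⬝ᵥ (C *ᵥ y))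
    (k : Fin n) : s k ≤ μ (Fin.castAdd n k) ∧ - s k ≤ μ (Fin.natAdd n k.rev) := by
  have key : ∀ y : Fin n ⊕ Fin n → ℝ, y ⬝ᵥ y = ∑ i, ((coordL U i y)^2 + (coordR V i y)^2) := by
    intro y
    have : y ⬝ᵥ y = (y ∘ Sum.inl) ⬝ᵥ (y ∘ Sum.inl) + (y ∘ Sum.inr) ⬝ᵥ (y ∘ Sum.inr) := by
      simp [dotProduct, Fintype.sum_sum_type]
    rw [this, orth_dot h.hU, orth_dot h.hV, ← Finset.sum_add_distrib]
    rfl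
  have key2 : ∀ y : Fin n ⊕ Fin n → ℝ, 2 * ((y ∘ Sum.inl) ⬝ᵥ (M *ᵥ (y ∘ Sum.inr))) =
      ∑ i, 2 * (s i * (coordL U i y * coordR V i y)) := by
    intro y
    rw [h.bilin, Finset.mul_sum]
    rfl
  constructor
  · refine minmax (κ := Fin n ⊕ {i : Fin n // k < i}) (by simp) C μ L hμ h1 h2 _ _
      (LinearMap.pi (Sum.elim (fun i => coordL U i - coordR V i) (fun i => coordL U i.1))) ?_ ?_
    · have : Fintype.card {i : Fin n // k < i} = n - 1 - k := by
        rw [Fintype.card_subtype]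
        have : (Finset.univ.filter fun i : Fin n => k < i) = Finset.Ioi k := by ext; simp
        rw [this, Fin.card_Ioi]
      simp [this]
      omega
    · intro y hy
      refine le_trans ?_ (hge y)
      rw [key, key2, Finset.mul_sum]
      refine Finset.sum_le_sum fun i _ => ?_
      have e1 : coordL U i y = coordR V i y := by
        have := congrFun hy (Sum.inl i)
        simpa [sub_eq_zero] using this
      rcases lt_or_ge k i with hi | hi
      · have e2 : coordL U i y = 0 := by
          have := congrFun hy (Sum.inr ⟨i, hi⟩)
          simpa using this
        rw [← e1, e2]; simp
      · rw [← e1]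
        have := h.anti hi
        nlinarith [sq_nonneg (coordL U i y)]
  · refine minmax (κ := {i : Fin n // i < k}) (by simp) C μ L hμ h1 h2 _ _
      (LinearMap.pi (fun i => coordL U i.1 - coordR V i.1)) ?_ ?_
    · have : Fintype.card {i : Fin n // i < k} = k := by
        rw [Fintype.card_subtype]
        have : (Finset.univ.filter fun i : Fin n => i < k) = Finset.Iio k := by ext; simp
        rw [this, Fin.card_Iio]
      simp [this]
      omega
    · intro y hy
      refine le_trans ?_ (hge y)
      rw [key, key2, Finset.mul_sum]
      refine Finset.sum_le_sum fun i _ => ?_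
      have hk0 := h.nonneg k
      have hi0 := h.nonneg i
      rcases lt_or_ge i k with hi | hi
      · have e1 : coordL U i y = coordR V i y := by
          have := congrFun hy ⟨i, hi⟩
          simpa [sub_eq_zero] using this
        rw [← e1]
        nlinarith [mul_nonneg hk0 (sq_nonneg (coordL U i y)), mul_nonneg hi0 (sq_nonneg (coordL U i y))]
      · have := h.anti hi
        nlinarith [mul_nonneg hi0 (sq_nonneg (coordL U i y + coordR V i y)), 
          mul_nonneg (sub_nonneg.2 this) (sq_nonneg (coordL U i y)),
          mul_nonneg (sub_nonneg.2 this) (sq_nonneg (coordR V i y))]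

open Matrix in
lemma mirsky {n : ℕ} {A B Ua Va Ub Vb U V : Matrix (Fin n) (Fin n) ℝ} {sa sb s : Fin n → ℝ}
    (ha : IsSVD A Ua Va sa) (hb : IsSVD B Ub Vb sb) (h : IsSVD (A - B) U V s) :
    ∑ i, |sa i - sb i| ≤ ∑ i, s i := by
  let C : Matrix (Fin n ⊕ Fin n) (Fin n ⊕ Fin n) ℝ :=
    Matrix.fromBlocks ((1/2 : ℝ) • (U * Matrix.diagonal s * Uᵀ)) ((1/2 : ℝ) • (A + B))
      ((1/2 : ℝ) • (A + B)ᵀ) ((1/2 : ℝ) • (V * Matrix.diagonal s * Vᵀ))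
  have hC : C.IsHermitian := by
    rw [Matrix.IsHermitian, Matrix.conjTranspose_eq_transpose_of_trivial]
    simp [C, Matrix.fromBlocks_transpose, Matrix.transpose_mul, mul_assoc]
  have htr : C.trace = ∑ i, s i := by
    have e : C.trace = ((1/2 : ℝ) • (U * Matrix.diagonal s * Uᵀ)).trace +
        ((1/2 : ℝ) • (V * Matrix.diagonal s * Vᵀ)).trace := by
      simp only [C, Matrix.trace, Fintype.sum_sum_type, Matrix.diag_apply,
        Matrix.fromBlocks_apply₁₁, Matrix.fromBlocks_apply₂₂]
    rw [e, Matrix.trace_smul, Matrix.trace_smul, Matrix.trace_mul_comm, ← mul_assoc, h.hU, Matrix.trace_mul_comm (V * _), ← mul_assoc, h.hV]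
    simp [Matrix.trace_diagonal]; ring
  have hq : ∀ y : Fin n ⊕ Fin n → ℝ, y ⬝ᵥ (C *ᵥ y) =
      (y ∘ Sum.inl) ⬝ᵥ ((A + B) *ᵥ (y ∘ Sum.inr)) +
      1/2 * ∑ i, (s i * (Uᵀ *ᵥ (y ∘ Sum.inl)) i ^ 2 + s i * (Vᵀ *ᵥ (y ∘ Sum.inr)) i ^ 2) := by
    intro y
    have hy : y = Sum.elim (y ∘ Sum.inl) (y ∘ Sum.inr) := by simp
    generalize y ∘ Sum.inl = a at hy ⊢
    generalize y ∘ Sum.inr = b at hy ⊢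
    subst hy
    have e : b ⬝ᵥ ((A + B)ᵀ *ᵥ a) = a ⬝ᵥ ((A + B) *ᵥ b) := by
      rw [Matrix.mulVec_transpose, dotProduct_comm, Matrix.dotProduct_mulVec]
    rw [Matrix.fromBlocks_mulVec, Finset.sum_add_distrib, ← orth_quad, ← orth_quad]
    simp only [Sum.elim_comp_inl, Sum.elim_comp_inr, sumElim_dotProduct_sumElim, dotProduct_add,
      Matrix.smul_mulVec, dotProduct_smul, e, smul_eq_mul]
    ring
  have hAB : ∀ a b : Fin n → ℝ, a ⬝ᵥ (A *ᵥ b) - a ⬝ᵥ (B *ᵥ b) =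
      ∑ i, s i * ((Uᵀ *ᵥ a) i * (Vᵀ *ᵥ b) i) := by
    intro a b
    rw [← h.bilin, Matrix.sub_mulVec, dotProduct_sub]
  obtain ⟨μ, L, hμ, ht, h1, h2⟩ := exists_spectral (N := n + n) (by simp) C hC
  have wa := weyl ha C μ L hμ h1 h2 (by
    intro y
    rw [hq, Matrix.add_mulVec, dotProduct_add]
    have e := hAB (y ∘ Sum.inl) (y ∘ Sum.inr)
    have : 0 ≤ ∑ i, s i * ((Uᵀ *ᵥ (y ∘ Sum.inl)) i - (Vᵀ *ᵥ (y ∘ Sum.inr)) i) ^ 2 :=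
      Finset.sum_nonneg fun i _ => mul_nonneg (h.nonneg i) (sq_nonneg _)
    have e2 : ∑ i, s i * ((Uᵀ *ᵥ (y ∘ Sum.inl)) i - (Vᵀ *ᵥ (y ∘ Sum.inr)) i) ^ 2 =
        ∑ i, (s i * (Uᵀ *ᵥ (y ∘ Sum.inl)) i ^ 2 + s i * (Vᵀ *ᵥ (y ∘ Sum.inr)) i ^ 2) -
        2 * ∑ i, s i * ((Uᵀ *ᵥ (y ∘ Sum.inl)) i * (Vᵀ *ᵥ (y ∘ Sum.inr)) i) := by
      rw [Finset.mul_sum, ← Finset.sum_sub_distrib]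
      exact Finset.sum_congr rfl fun i _ => by ring
    linarith)
  have wb := weyl hb C μ L hμ h1 h2 (by
    intro y
    rw [hq, Matrix.add_mulVec, dotProduct_add]
    have e := hAB (y ∘ Sum.inl) (y ∘ Sum.inr)
    have : 0 ≤ ∑ i, s i * ((Uᵀ *ᵥ (y ∘ Sum.inl)) i + (Vᵀ *ᵥ (y ∘ Sum.inr)) i) ^ 2 :=
      Finset.sum_nonneg fun i _ => mul_nonneg (h.nonneg i) (sq_nonneg _)
    have e2 : ∑ i, s i * ((Uᵀ *ᵥ (y ∘ Sum.inl)) i + (Vᵀ *ᵥ (y ∘ Sum.inr)) i) ^ 2 =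
        ∑ i, (s i * (Uᵀ *ᵥ (y ∘ Sum.inl)) i ^ 2 + s i * (Vᵀ *ᵥ (y ∘ Sum.inr)) i ^ 2) +
        2 * ∑ i, s i * ((Uᵀ *ᵥ (y ∘ Sum.inl)) i * (Vᵀ *ᵥ (y ∘ Sum.inr)) i) := by
      rw [Finset.mul_sum, ← Finset.sum_add_distrib]
      exact Finset.sum_congr rfl fun i _ => by ring
    linarith)
  have hsum : ∑ k, μ k = ∑ i : Fin n, (μ (Fin.castAdd n i) + μ (Fin.natAdd n i.rev)) := by
    rw [Fin.sum_univ_add, Finset.sum_add_distrib]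
    congr 1
    exact (Equiv.sum_comp Fin.revPerm (fun i => μ (Fin.natAdd n i))).symm
  rw [← htr, ht, hsum]
  refine Finset.sum_le_sum fun i _ => ?_
  have := wa i
  have := wb i
  rw [abs_le']
  constructor <;> linarith [(wa i).1, (wa i).2, (wb i).1, (wb i).2]

/-- Null space property. -/
lemma nsp {n r : ℕ} {x z U V : Matrix (Fin n) (Fin n) ℝ} {s : Fin n → ℝ}
    (hx : x.rank ≤ r) (hd : nuclearNorm n (x + z) ≤ nuclearNorm n x) (hz : IsSVD z U V s) :
    ∑ i : Fin n, (if (i : ℕ) < r then 0 else s i) ≤ ∑ i : Fin n, (if (i : ℕ) < r then s i else 0) := by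
  obtain ⟨Ux, Vx, sx, hsx, hnx, hrx⟩ := exists_svd x
  obtain ⟨Uw, Vw, sw, hsw, hnw, -⟩ := exists_svd (x + z)
  have hz' : IsSVD (-z) (-U) V s :=
    ⟨by simp [hz.hU], hz.hV, hz.anti, hz.nonneg, by rw [hz.eq]; simp⟩
  rw [← sub_neg_eq_add] at hsw
  have hm := mirsky hsx hz' hsw
  have h0 : ∀ i : Fin n, r ≤ (i : ℕ) → sx i = 0 := by
    intro i hi
    by_contra hne
    have hsub : Finset.Iic i ⊆ Finset.univ.filter fun j => sx j ≠ 0 := by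
      intro j hj
      simp only [Finset.mem_Iic] at hj
      simp only [Finset.mem_filter, Finset.mem_univ, true_and]
      have h1 := hsx.anti hj
      have h2 := lt_of_le_of_ne (hsx.nonneg i) (Ne.symm hne)
      linarith
    have := Finset.card_le_card hsub
    rw [Fin.card_Iic, ← Fintype.card_subtype, hrx] at this
    omega
  have : ∑ i, (sx i - (if (i : ℕ) < r then s i else 0) + (if (i : ℕ) < r then 0 else s i))
      ≤ ∑ i, |sx i - s i| := by
    refine Finset.sum_le_sum fun i _ => ?_
    split_ifs with h
    · simpa only [add_zero] using le_abs_self _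
    · rw [h0 i (not_lt.1 h)]; simpa using neg_le_abs (0 - s i)
  rw [Finset.sum_add_distrib, Finset.sum_sub_distrib] at this
  linarith
open Matrix in
/-- Matrices with given singular vectors. -/
def emb {n : ℕ} (U V : Matrix (Fin n) (Fin n) ℝ) :
    (Fin n → ℝ) →ₗ[ℝ] EuclideanSpace ℝ (Fin n × Fin n) where
  toFun c := WithLp.toLp 2 (fun p => (U * Matrix.diagonal c * Vᵀ) p.1 p.2)
  map_add' c d := by
    ext p
    have : Matrix.diagonal (c + d) = Matrix.diagonal c + Matrix.diagonal d := by
      rw [Matrix.diagonal_add]; rfl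
    rw [this, mul_add, add_mul]; rfl
  map_smul' t c := by
    ext p
    simp [Matrix.diagonal_smul]

open Matrix in
lemma emb_inner {n : ℕ} {U V : Matrix (Fin n) (Fin n) ℝ} (hU : Uᵀ * U = 1) (hV : Vᵀ * V = 1)
    (c d : Fin n → ℝ) : inner ℝ (emb U V c) (emb U V d) = ∑ i, c i * d i := by
  have h1 : inner ℝ (emb U V c) (emb U V d) =
      ((U * Matrix.diagonal c * Vᵀ)ᵀ * (U * Matrix.diagonal d * Vᵀ)).trace := by
    simp only [PiLp.inner_apply, Matrix.trace, Matrix.diag_apply]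
    rw [Fintype.sum_prod_type, Finset.sum_comm]
    refine Finset.sum_congr rfl fun j _ => ?_
    rw [Matrix.mul_apply]
    refine Finset.sum_congr rfl fun i _ => ?_
    simp only [Matrix.transpose_apply]
    simp [emb, mul_comm]
  have h2 : (U * Matrix.diagonal c * Vᵀ)ᵀ * (U * Matrix.diagonal d * Vᵀ) =
      V * (Matrix.diagonal c * ((Uᵀ * U) * Matrix.diagonal d) * Vᵀ) := by
    simp [Matrix.transpose_mul, mul_assoc]
  rw [h1, h2, hU, Matrix.trace_mul_comm, mul_assoc, hV]
  simp [Matrix.diagonal_mul_diagonal, Matrix.trace_diagonal]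

lemma emb_norm {n : ℕ} {U V : Matrix (Fin n) (Fin n) ℝ} (hU : U.transpose * U = 1)
    (hV : V.transpose * V = 1) (c : Fin n → ℝ) : ‖emb U V c‖ ^ 2 = ∑ i, c i ^ 2 := by
  rw [← real_inner_self_eq_norm_sq, emb_inner hU hV]
  exact Finset.sum_congr rfl fun i _ => by ring

lemma emb_rank {n r : ℕ} (U V : Matrix (Fin n) (Fin n) ℝ) (c : Fin n → ℝ) (R : Finset (Fin n))
    (hR : R.card ≤ r) (hc : ∀ i, i ∉ R → c i = 0) :
    (Matrix.of fun i j => emb U V c (i, j)).rank ≤ r := by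
  have : (Matrix.of fun i j => emb U V c (i, j)) = U * Matrix.diagonal c * V.transpose := by
    ext i j; rfl
  rw [this]
  refine (Matrix.rank_mul_le_left _ _).trans ((Matrix.rank_mul_le_right _ _).trans ?_)
  rw [Matrix.rank_diagonal, Fintype.card_subtype]
  refine le_trans (Finset.card_le_card ?_) hR
  intro i hi
  by_contra h
  simp [hc i h] at hi

/-- Fractional knapsack. -/
lemma knapsack {n r : ℕ} (w y : Fin n → ℝ) (h0 : ∀ i, 0 ≤ w i) (h1 : ∀ i, w i ≤ 1)
    (hs : ∑ i, w i ≤ r) : ∃ R : Finset (Fin n), R.card ≤ r ∧ ∑ i, w i * y i ≤ ∑ i ∈ R, y i := by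
  obtain ⟨R, hR, hmax⟩ := Finset.exists_max_image
    (Finset.univ.filter fun R : Finset (Fin n) => R.card ≤ r) (fun R => ∑ i ∈ R, y i)
    ⟨∅, by simp⟩
  simp only [Finset.mem_filter, Finset.mem_univ, true_and] at hR hmax
  refine ⟨R, hR, ?_⟩
  have hpos : ∀ i ∈ R, 0 ≤ y i := by
    intro i hi
    have := hmax (R.erase i) ((Finset.card_le_card (Finset.erase_subset _ _)).trans hR)
    have e := Finset.add_sum_erase R y hi
    linarith
  obtain ⟨τ, hτ0, hτ1, hτ2, hτ3⟩ : ∃ τ : ℝ, 0 ≤ τ ∧ (∀ i ∈ R, τ ≤ y i) ∧ (∀ i, i ∉ R → y i ≤ τ) ∧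
      τ * r = τ * R.card := by
    rcases hR.lt_or_eq with hlt | heq
    · refine ⟨0, le_rfl, hpos, fun i hi => ?_, by simp⟩
      have := hmax (insert i R) (by rw [Finset.card_insert_of_notMem hi]; omega)
      rw [Finset.sum_insert hi] at this
      linarith
    · rcases R.eq_empty_or_nonempty with he | hne
      · subst he
        refine ⟨∑ i, |y i|, by positivity, by simp, fun i _ => ?_, by rw [heq]⟩
        exact (le_abs_self _).trans
          (Finset.single_le_sum (f := fun i => |y i|) (fun _ _ => abs_nonneg _) (Finset.mem_univ i))
      · obtain ⟨j, hj, hmin⟩ := Finset.exists_min_image R y hne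
        refine ⟨y j, hpos j hj, hmin, fun i hi => ?_, by rw [heq]⟩
        have hi' : i ∉ R.erase j := fun h => hi (Finset.mem_of_mem_erase h)
        have := hmax (insert i (R.erase j)) (by
          rw [Finset.card_insert_of_notMem hi', Finset.card_erase_of_mem hj]
          have := Finset.card_pos.2 hne
          omega)
        rw [Finset.sum_insert hi'] at this
        have e := Finset.add_sum_erase R y hj
        linarith
  have e : ∑ i, w i * (y i - τ) ≤ ∑ i ∈ R, (y i - τ) := by
    rw [← Finset.sum_add_sum_compl R]
    have a1 : ∑ i ∈ R, w i * (y i - τ) ≤ ∑ i ∈ R, (y i - τ) :=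
      Finset.sum_le_sum fun i hi => by
        have := hτ1 i hi
        nlinarith [h1 i]
    have a2 : ∑ i ∈ Rᶜ, w i * (y i - τ) ≤ 0 :=
      Finset.sum_nonpos fun i hi => by
        have := hτ2 i (by simpa using hi)
        nlinarith [h0 i]
    linarith
  have e1 : ∑ i, w i * (y i - τ) = ∑ i, w i * y i - τ * ∑ i, w i := by
    rw [Finset.mul_sum, ← Finset.sum_sub_distrib]
    exact Finset.sum_congr rfl fun i _ => by ring
  have e2 : ∑ i ∈ R, (y i - τ) = ∑ i ∈ R, y i - τ * R.card := by
    rw [Finset.sum_sub_distrib]; simp; ring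
  have := mul_le_mul_of_nonneg_left hs hτ0
  linarith

lemma mem_hull {H : Type*} [NormedAddCommGroup H] [NormedSpace ℝ H] (S : Set H) (e : H)
    (he : e ∈ S) (hne : -e ∈ S) (h1 : ‖e‖ = 1) (t : ℝ) (h0 : 0 ≤ t) (ht : t ≤ 1) :
    t • e ∈ convexHull ℝ (S ∩ {u : H | ‖u‖ = 1}) := by
  have m1 : e ∈ convexHull ℝ (S ∩ {u : H | ‖u‖ = 1}) := subset_convexHull ℝ _ ⟨he, h1⟩
  have m2 : -e ∈ convexHull ℝ (S ∩ {u : H | ‖u‖ = 1}) :=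
    subset_convexHull ℝ _ ⟨hne, by simpa using h1⟩
  have := (convex_convexHull ℝ (S ∩ {u : H | ‖u‖ = 1})) m1 m2 (a := (1 + t)/2) (b := (1 - t)/2)
    (by linarith) (by linarith) (by ring)
  convert this using 1
  rw [smul_neg, ← sub_eq_add_neg, ← sub_smul]
  congr 1; ring

lemma norm_le_sigma {H : Type*} [NormedAddCommGroup H] [NormedSpace ℝ H] (S : Set H) (x : H)
    (h : sigmaNorm S x ≠ ⊤) : ‖x‖ ≤ (sigmaNorm S x).toReal := by
  rw [← ENNReal.ofReal_le_iff_le_toReal h]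
  refine le_sInf ?_
  rintro t ⟨r, hr, rfl, hx⟩
  apply ENNReal.ofReal_le_ofReal
  obtain ⟨y, hy, rfl⟩ := hx
  have hsub : closure (convexHull ℝ (S ∩ {u : H | ‖u‖ = 1})) ⊆ Metric.closedBall 0 1 := by
    refine closure_minimal (convexHull_min ?_ (convex_closedBall 0 1)) Metric.isClosed_closedBall
    rintro u ⟨-, hu⟩
    simp only [mem_ofPred_eq] at hu
    simp [hu]
  have := hsub hy
  simp only [Metric.mem_closedBall, dist_zero_right] at this
  simp only [norm_smul, Real.norm_eq_abs, abs_of_nonneg hr]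
  nlinarith

lemma sigma_le {n r : ℕ} (hr1 : 1 ≤ r) (hrn : r ≤ n) {U V : Matrix (Fin n) (Fin n) ℝ}
    (hU : U.transpose * U = 1) (hV : V.transpose * V = 1) (w : Fin n → ℝ) (α t : ℝ) (ht : 0 < t)
    (hα : 0 < α) (hαt : r * α ^ 2 ≤ t ^ 2) (h0 : ∀ i, 0 ≤ w i) (h1 : ∀ i, w i ≤ α)
    (hs : ∑ i, w i ≤ r * α) :
    sigmaNorm {x : EuclideanSpace ℝ (Fin n × Fin n) |
          (Matrix.of fun i j => x (i, j)).rank ≤ r} (emb U V w) ≤ ENNReal.ofReal t := by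
  refine sInf_le ⟨t, ht.le, rfl, ?_⟩
  rw [Set.mem_smul_set_iff_inv_smul_mem₀ ht.ne']
  by_contra hcon
  obtain ⟨f, u, hf, hu⟩ := geometric_hahn_banach_closed_point
    (convex_convexHull ℝ _).closure isClosed_closure hcon
  let y : Fin n → ℝ := fun i => f (emb U V (Pi.single i 1))
  have hfc : ∀ c : Fin n → ℝ, f (emb U V c) = ∑ i, c i * y i := by
    intro c
    have : c = ∑ i, c i • (Pi.single i (1 : ℝ) : Fin n → ℝ) := by
      rw [← pi_eq_sum_univ' c]
    conv_lhs => rw [this]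
    simp [y, map_sum]
  obtain ⟨R, hR, hRy⟩ := knapsack (r := r) (fun i => w i / α) y (fun i => div_nonneg (h0 i) hα.le)
    (fun i => (div_le_one hα).2 (h1 i)) (by
      rw [← Finset.sum_div, div_le_iff₀ hα]; exact hs)
  -- the maximising atom
  let c : Fin n → ℝ := fun i => if i ∈ R then α / t else 0
  have hcsum : ∑ i, c i ^ 2 = R.card * (α / t) ^ 2 := by
    simp [c, ite_pow]
  have hle : f (t⁻¹ • emb U V w) ≤ f (emb U V c) := by
    rw [map_smul, hfc, hfc, smul_eq_mul]
    have e1 : ∑ i, c i * y i = α / t * ∑ i ∈ R, y i := by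
      simp [c, ite_mul, Finset.mul_sum]
    have e2 : ∑ i, w i * y i = α * ∑ i, w i / α * y i := by
      rw [Finset.mul_sum]
      exact Finset.sum_congr rfl fun i _ => by field_simp
    rw [e1, e2, ← mul_assoc, div_eq_inv_mul]
    exact mul_le_mul_of_nonneg_left hRy (by positivity)
  have hmem : emb U V c ∈ closure (convexHull ℝ ({x : EuclideanSpace ℝ (Fin n × Fin n) |
          (Matrix.of fun i j => x (i, j)).rank ≤ r} ∩ {u | ‖u‖ = 1})) := by
    apply subset_closure
    -- a unit vector in direction
    obtain ⟨d, R', τ, hR', hd, hτ0, hτ1, hnd, hcd⟩ : ∃ (d : Fin n → ℝ) (R' : Finset (Fin n)) (τ : ℝ),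
        R'.card ≤ r ∧ (∀ i, i ∉ R' → d i = 0) ∧ 0 ≤ τ ∧ τ ≤ 1 ∧ ∑ i, d i ^ 2 = 1 ∧ c = τ • d := by
      by_cases hc : ∑ i, c i ^ 2 = 0
      · let i0 : Fin n := ⟨0, by omega⟩
        refine ⟨Pi.single i0 1, {i0}, 0, by simpa using hr1, ?_, le_rfl, zero_le_one, ?_, ?_⟩
        · intro i hi
          simp only [Finset.mem_singleton] at hi
          simp [Pi.single_apply, hi]
        · simp [Pi.single_apply, ite_pow]
        · ext i
          have := (Finset.sum_eq_zero_iff_of_nonneg (fun i _ => sq_nonneg (c i))).1 hc i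
            (Finset.mem_univ i)
          simpa using this
      · have hp : 0 < ∑ i, c i ^ 2 := lt_of_le_of_ne (by positivity) (Ne.symm hc)
        set q := Real.sqrt (∑ i, c i ^ 2) with hq
        have hq0 : 0 < q := Real.sqrt_pos.2 hp
        have hqq : q ^ 2 = ∑ i, c i ^ 2 := Real.sq_sqrt hp.le
        refine ⟨q⁻¹ • c, R, q, hR, fun i hi => by simp [c, hi], hq0.le, ?_, ?_, ?_⟩
        · have : q ^ 2 ≤ 1 := by
            rw [hqq, hcsum, div_pow, ← mul_div_assoc, div_le_one (by positivity)]
            refine le_trans ?_ hαt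
            have : (R.card : ℝ) ≤ r := by exact_mod_cast hR
            gcongr
          nlinarith
        · simp only [Pi.smul_apply, smul_eq_mul, mul_pow, ← Finset.mul_sum, ← hqq]
          field_simp
        · rw [smul_smul, mul_inv_cancel₀ hq0.ne', one_smul]
    rw [hcd, map_smul]
    refine mem_hull _ (emb U V d) ?_ ?_ ?_ τ hτ0 hτ1
    · exact emb_rank U V d R' hR' hd
    · rw [← map_neg]
      exact emb_rank U V (-d) R' hR' (fun i hi => by simp [hd i hi])
    · have := emb_norm hU hV d
      rw [hnd] at this
      nlinarith [norm_nonneg (emb U V d)]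
  have := hf _ hmem
  linarith
lemma nuclearNorm_zero (n : ℕ) : nuclearNorm n 0 = 0 := by
  obtain ⟨U, V, s, hs, h1, h2⟩ := exists_svd (0 : Matrix (Fin n) (Fin n) ℝ)
  rw [← h1]
  rw [Matrix.rank_zero, Fintype.card_eq_zero_iff] at h2
  refine Finset.sum_eq_zero fun i _ => ?_
  by_contra h
  exact h2.elim ⟨i, h⟩

lemma nuclearNorm_nonneg (n : ℕ) (A : Matrix (Fin n) (Fin n) ℝ) : 0 ≤ nuclearNorm n A :=
  Finset.sum_nonneg fun _ _ => Real.sqrt_nonneg _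

lemma sigma_gap {H : Type*} [NormedAddCommGroup H] [InnerProductSpace ℝ H] (S : Set H) (x z : H)
    (h : sigmaNorm S (x + z) ≠ ⊤) :
    ‖z‖ ^ 2 ≤ (sigmaNorm S (x + z)).toReal ^ 2 - ‖x‖ ^ 2 - 2 * inner ℝ x z := by
  have h1 := norm_le_sigma S _ h
  have h2 := pow_le_pow_left₀ (norm_nonneg _) h1 2
  rw [norm_add_sq_real] at h2
  linarith

/-- for the model of `n×n` real matrices of rank at most `r` (with the
Frobenius Hilbert structure) and the nuclear norm as regularizer, `δ_Σ(f) ≥ 1/√2`. -/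
theorem stmt19 (n r : ℕ) (hr1 : 1 ≤ r) (hrn : r ≤ n) :
    1 / Real.sqrt 2 ≤
      deltaSigma ℝ
        {x : EuclideanSpace ℝ (Fin n × Fin n) |
          (Matrix.of fun i j => x (i, j)).rank ≤ r}
        (fun x => ENNReal.ofReal (nuclearNorm n (Matrix.of fun i j => x (i, j)))) := by
  have hn : 0 < n := by omega
  let i0 : Fin n := ⟨0, hn⟩
  unfold deltaSigma
  refine le_csInf ?_ ?_
  · have h11 : (1 : Matrix (Fin n) (Fin n) ℝ).transpose * 1 = 1 := by simp
    let x := emb (1 : Matrix (Fin n) (Fin n) ℝ) 1 (Pi.single i0 1)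
    refine ⟨_, -x, ⟨x, ?_, ?_⟩, ?_, rfl⟩
    · refine emb_rank 1 1 _ {i0} (by simpa using hr1) ?_
      intro i hi
      simp only [Finset.mem_singleton] at hi
      simp [hi]
    · apply ENNReal.ofReal_le_ofReal
      have : (Matrix.of fun i j => (x + -x) (i, j)) = (0 : Matrix (Fin n) (Fin n) ℝ) := by
        ext i j; simp
      rw [this, nuclearNorm_zero]
      exact nuclearNorm_nonneg _ _
    · intro h
      have h2 := emb_norm h11 h11 (Pi.single i0 1)
      have h3 : emb (1 : Matrix (Fin n) (Fin n) ℝ) 1 (Pi.single i0 1) = 0 := neg_eq_zero.1 h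
      rw [h3] at h2
      simp [Pi.single_apply, ite_pow] at h2
  · rintro d ⟨z, ⟨x0, hx0, hd⟩, hz0, rfl⟩
    set S : Set (EuclideanSpace ℝ (Fin n × Fin n)) := {x : EuclideanSpace ℝ (Fin n × Fin n) |
          (Matrix.of fun i j => x (i, j)).rank ≤ r} with hS
    have hbdd : BddAbove {c : ℝ | ∃ x, deltaAdmissible ℝ S z x ∧ c = deltaXZ ℝ S x z} := by
      refine ⟨1, ?_⟩
      rintro c ⟨x, -, rfl⟩
      unfold deltaXZ
      split_ifs with h
      · exact zero_le_one
      · refine div_le_one_of_le₀ ?_ (by positivity)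
        have h1 := sigma_gap S x z h
        have h2 := Real.le_sqrt_of_sq_le h1
        have h3 := neg_le_of_abs_le (abs_real_inner_le_norm x z)
        have h4 := mul_le_mul_of_nonneg_left h2 (norm_nonneg x)
        simp only [RCLike.re_to_real]
        linarith
    obtain ⟨U, V, s, hsvd, -, -⟩ := exists_svd (Matrix.of fun i j => z (i, j))
    have hzE : z = emb U V s := by
      ext p
      exact congrFun (congrFun hsvd.eq p.1) p.2
    have hN := nsp (r := r) (x := Matrix.of fun i j => x0 (i, j)) hx0 (by
      have := (ENNReal.ofReal_le_ofReal_iff (nuclearNorm_nonneg _ _)).1 hd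
      exact this) hsvd
    set a : Fin n → ℝ := fun i => if (i : ℕ) < r then s i else 0 with ha
    set w : Fin n → ℝ := fun i => if (i : ℕ) < r then 0 else s i with hw
    have haw : a + w = s := by
      ext i; simp only [ha, hw, Pi.add_apply]; split_ifs <;> simp
    have haw0 : ∑ i, a i * w i = 0 :=
      Finset.sum_eq_zero fun i _ => by simp only [ha, hw]; split_ifs <;> simp
    have ha0 : ∀ i, 0 ≤ a i := fun i => by
      simp only [ha]; split_ifs
      · exact hsvd.nonneg i
      · exact le_rfl
    have hw0 : ∀ i, 0 ≤ w i := fun i => by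
      simp only [hw]; split_ifs
      · exact le_rfl
      · exact hsvd.nonneg i
    have hai0 : 0 < a i0 := by
      have e : a i0 = s i0 := if_pos (by simp only [i0]; omega)
      rw [e]
      refine lt_of_le_of_ne (hsvd.nonneg i0) fun h => hz0 ?_
      have : s = 0 := by
        ext i
        exact le_antisymm (by rw [Pi.zero_apply, h]; exact hsvd.anti (Nat.zero_le _)) (hsvd.nonneg i)
      rw [hzE, this, map_zero]
    have hasum : 0 < ∑ i, a i := Finset.sum_pos' (fun i _ => ha0 i) ⟨i0, Finset.mem_univ _, hai0⟩
    have hA : 0 < ∑ i, a i ^ 2 :=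
      Finset.sum_pos' (fun i _ => sq_nonneg _) ⟨i0, Finset.mem_univ _, by positivity⟩
    let T : Finset (Fin n) := Finset.univ.filter fun i => (i : ℕ) < r
    have hT : T.card = r := by
      simp only [T, Fin.card_filter_val_lt]; omega
    have hr0 : (0 : ℝ) < r := by exact_mod_cast hr1
    have hsumT : ∀ g : ℝ → ℝ, g 0 = 0 → ∑ i, g (a i) = ∑ i ∈ T, g (s i) := by
      intro g hg
      rw [Finset.sum_filter]
      refine Finset.sum_congr rfl fun i _ => ?_
      simp only [ha]; split_ifs <;> simp [hg]
    have hCS : (∑ i, a i) ^ 2 ≤ r * ∑ i, a i ^ 2 := by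
      have h1 := hsumT id rfl
      have h2 := hsumT (fun t => t ^ 2) (by simp)
      simp only [id] at h1
      rw [h1, h2, ← hT]
      exact sq_sum_le_card_mul_sum_sq
    set t := Real.sqrt (∑ i, a i ^ 2) with ht
    have ht0 : 0 < t := Real.sqrt_pos.2 hA
    have htt : t ^ 2 = ∑ i, a i ^ 2 := Real.sq_sqrt hA.le
    have hsig := sigma_le hr1 hrn hsvd.hU hsvd.hV w ((∑ i, a i) / r) t ht0 (by positivity)
      (by
        rw [htt, div_pow, ← mul_div_assoc, div_le_iff₀ (by positivity)]
        nlinarith)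
      hw0
      (by
        intro i
        simp only [hw]; split_ifs with h
        · positivity
        · rw [le_div_iff₀ hr0]
          have h1 := hsumT id rfl
          simp only [id] at h1
          rw [h1]
          have : ∑ j ∈ T, s i ≤ ∑ j ∈ T, s j := by
            refine Finset.sum_le_sum fun j hj => hsvd.anti ?_
            have : (j : ℕ) < r := by simpa [T] using hj
            rw [Fin.le_def]; omega
          rw [Finset.sum_const, hT, nsmul_eq_mul] at this
          linarith)
      (by
        rw [mul_div_cancel₀ _ hr0.ne']
        exact hN)
    have hxz : -emb U V a + z = emb U V w := by
      rw [hzE, ← haw, map_add]; abel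
    rw [← hS, ← hxz] at hsig
    have htop : sigmaNorm S (-emb U V a + z) ≠ ⊤ := ne_top_of_le_ne_top ENNReal.ofReal_ne_top hsig
    have hreal : (sigmaNorm S (-emb U V a + z)).toReal ≤ t := ENNReal.toReal_le_of_le_ofReal ht0.le hsig
    have hin : inner ℝ (-emb U V a) z = - t ^ 2 := by
      rw [inner_neg_left, hzE, emb_inner hsvd.hU hsvd.hV, htt, ← haw]
      congr 1
      simp only [Pi.add_apply, mul_add, Finset.sum_add_distrib, haw0, add_zero]
      exact Finset.sum_congr rfl fun i _ => by ring
    have hnx : ‖-emb U V a‖ = t := by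
      rw [norm_neg, ← Real.sqrt_sq (norm_nonneg _), emb_norm hsvd.hU hsvd.hV]
    refine le_csSup_of_le hbdd ⟨-emb U V a, ⟨?_, ?_, Or.inr ?_⟩, rfl⟩ ?_
    · rw [← map_neg]
      exact emb_rank U V (-a) T hT.le (fun i hi => by
        have : ¬ (i : ℕ) < r := by simpa [T] using hi
        simp [ha, this])
    · rw [← norm_pos_iff, hnx]; exact ht0
    · refine lt_of_lt_of_le ?_ (sigma_gap S _ z htop)
      have := norm_pos_iff.2 hz0
      positivity
    · unfold deltaXZ
      rw [if_neg htop]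
      simp only [RCLike.re_to_real]
      rw [hin, hnx]
      set m := (sigmaNorm S (-emb U V a + z)).toReal with hm
      have hm0 : 0 ≤ m := ENNReal.toReal_nonneg
      have e : m ^ 2 - t ^ 2 - 2 * -t ^ 2 = m ^ 2 + t ^ 2 := by ring
      rw [e]
      have hle : Real.sqrt (m ^ 2 + t ^ 2) ≤ Real.sqrt 2 * t := by
        rw [← Real.sqrt_sq ht0.le, ← Real.sqrt_mul (by norm_num), Real.sqrt_sq ht0.le]
        exact Real.sqrt_le_sqrt (by nlinarith)
      have hpos : 0 < Real.sqrt (m ^ 2 + t ^ 2) := Real.sqrt_pos.2 (by positivity)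
      rw [div_le_div_iff₀ (by positivity) (by positivity)]
      nlinarith [mul_le_mul_of_nonneg_left hle ht0.le]
end
end
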